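/- arXiv:math/0505154 — 3 statements merged into one kernel-verified Lean document; each statement's English description precedes it below -/
import Mathlib

section
/- (Weak commutant lifting, Lemma 2.1) Let A, B be commuting contractions on H and let X̃ ∈ B(K̃) be a co-isometric extension of A, where K̃ ⊇ H. Then there exists a Hilbert space K ⊇ K̃ and commuting co-isometries X, Y ∈ B(K) such that X extends X̃ and Y extends B. -/
open ContinuousLinearMap

/-- Data witnessing the conclusion of the weak commutant lifting lemma: a Hilbert
space `K ⊇ K̃` with commuting co-isometries `X, Y` such that `X` extends `X̃` and
`Y` extends `B`. -/
structure CommutantLift {H Kt : Type}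
    [NormedAddCommGroup H] [InnerProductSpace ℂ H] [CompleteSpace H]
    [NormedAddCommGroup Kt] [InnerProductSpace ℂ Kt] [CompleteSpace Kt]
    (B : H →L[ℂ] H) (e : H →ₗᵢ[ℂ] Kt) (Xt : Kt →L[ℂ] Kt) where
  K : Type
  [grp : NormedAddCommGroup K]
  [ips : InnerProductSpace ℂ K]
  [cpl : CompleteSpace K]
  emb : Kt →ₗᵢ[ℂ] K
  X : K →L[ℂ] K
  Y : K →L[ℂ] K
  X_coisometry : X ∘L ContinuousLinearMap.adjoint X = 1
  Y_coisometry : Y ∘L ContinuousLinearMap.adjoint Y = 1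
  commute : X ∘L Y = Y ∘L X
  X_extends : ∀ z : Kt, X (emb z) = emb (Xt z)
  Y_extends : ∀ x : H, Y (emb (e x)) = emb (e (B x))

/-!
A co-isometry `X` that extends `A` acts on the smallest reducing subspace containing `H` in a way
that `A` alone determines, because the Gram matrix of the vectors `X† ^ n h` involves only powers
of `A`. If `X₁, Y₁` are commuting co-isometric extensions of `A, B`, as in Andô's theorem, then
identifying the minimal part of `X̃` with that of `X₁` gives a contraction `C` which is the identity
on `H` and intertwines `X̃` with `X₁` and `X̃†` with `X₁†`. The contraction `B̃ = C† Y₁ C` then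
extends `B` and commutes with `X̃`, and Andô's theorem for `X̃, B̃` yields `X, Y`.

Andô's theorem is proved for the adjoints. Isometric dilations of two commuting contractions are
built on `H ⊕ ℓ²(G ⊕ G)`, where the defect spaces of the contractions are orthogonal subspaces of
`G`. Each dilation moves sequences by half a step, so both products move them by a full step, and
the products differ by an isometry between defects that extends to a reflection of `G ⊕ G`. Letting
this reflection act entrywise in the dilations makes them commute.
-/

open scoped InnerProductSpace

universe u v w

section RangeAndComplement

variable {𝕜 S E F : Type*} [RCLike 𝕜] [AddCommGroup S] [Module 𝕜 S]
  [NormedAddCommGroup E] [InnerProductSpace 𝕜 E]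
  [NormedAddCommGroup F] [InnerProductSpace 𝕜 F]

theorem mem_orthogonal_range_iff (p : S →ₗ[𝕜] E) (z : E) :
    z ∈ p.rangeᗮ ↔ ∀ s, ⟪p s, z⟫_𝕜 = 0 := by
  simp [Submodule.mem_orthogonal]

theorem inner_map_eq_of_norm_map_eq {p : S →ₗ[𝕜] E} {q : S →ₗ[𝕜] F}
    (h : ∀ s, ‖q s‖ = ‖p s‖) (s t : S) : ⟪q s, q t⟫_𝕜 = ⟪p s, p t⟫_𝕜 := by
  rw [inner_eq_sum_norm_sq_div_four, inner_eq_sum_norm_sq_div_four]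
  simp only [← map_smul, ← map_add, ← map_sub, h]

variable [CompleteSpace E]

theorem eq_of_eqOn_range_of_eqOn_orthogonal (p : S →ₗ[𝕜] E) {f g : E →L[𝕜] F}
    (h_range : ∀ s, f (p s) = g (p s)) (h_orthogonal : ∀ z ∈ p.rangeᗮ, f z = g z) :
    f = g := by
  let M := p.range.topologicalClosure
  have : CompleteSpace M := p.range.isClosed_topologicalClosure.completeSpace_coe
  have h_closure : M ≤ LinearMap.eqLocus f.toLinearMap g.toLinearMap :=
    p.range.topologicalClosure_minimal (by rintro _ ⟨s, rfl⟩; exact h_range s)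
      (isClosed_eq f.continuous g.continuous)
  ext z
  obtain ⟨x, hx, y, hy, rfl⟩ := M.exists_add_mem_mem_orthogonal z
  have hfg_x : f x = g x := h_closure hx
  rw [map_add, map_add, hfg_x, h_orthogonal y (p.range.orthogonal_closure ▸ hy)]

theorem exists_contraction_map_range_of_norm_eq [CompleteSpace F] (p : S →ₗ[𝕜] E)
    (q : S →ₗ[𝕜] F) (h : ∀ s, ‖q s‖ = ‖p s‖) :
    ∃ C : E →L[𝕜] F, ‖C‖ ≤ 1 ∧ (∀ s, C (p s) = q s) ∧ (∀ s, adjoint C (q s) = p s) ∧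
      ∀ z ∈ p.rangeᗮ, C z = 0 := by
  let M := p.range.topologicalClosure
  have : CompleteSpace M := p.range.isClosed_topologicalClosure.completeSpace_coe
  let p' : S →ₗ[𝕜] M := p.codRestrict M fun s ↦ p.range.le_topologicalClosure ⟨s, rfl⟩
  have p'_dense : DenseRange p' := fun x ↦ by
    rw [closure_subtype, ← Set.range_comp]
    exact x.2
  have q_bound (s : S) : ‖q s‖ ≤ 1 * ‖p' s‖ := by simpa [p'] using (h s).le
  let C : E →L[𝕜] F := q.extendOfNorm p' ∘L M.orthogonalProjectionOnto
  have C_range (s : S) : C (p s) = q s := by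
    have : M.orthogonalProjectionOnto (p s) = p' s :=
      M.orthogonalProjectionOnto_mem_subspace_eq_self (p' s)
    simp only [C, comp_apply, this, LinearMap.extendOfNorm_eq p'_dense ⟨1, q_bound⟩]
  have C_orthogonal (z : E) (hz : z ∈ p.rangeᗮ) : C z = 0 := by
    have : M.orthogonalProjectionOnto z = 0 :=
      Submodule.orthogonalProjectionOnto_eq_zero_iff.2 (p.range.orthogonal_closure.symm ▸ hz)
    simp only [C, comp_apply, this, map_zero]
  refine ⟨C, ?_, C_range, fun s ↦ ?_, C_orthogonal⟩
  · calc ‖C‖ ≤ ‖q.extendOfNorm p'‖ * ‖M.orthogonalProjectionOnto‖ := opNorm_comp_le _ _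
      _ ≤ 1 := mul_le_one₀ (LinearMap.opNorm_extendOfNorm_le p'_dense zero_le_one q_bound)
          (norm_nonneg _) M.orthogonalProjectionOnto_norm_le
  · have : innerSL 𝕜 (q s) ∘L C = innerSL 𝕜 (p s) :=
      eq_of_eqOn_range_of_eqOn_orthogonal p
        (fun t ↦ by simp [C_range, inner_map_eq_of_norm_map_eq h])
        (fun z hz ↦ by simp [C_orthogonal z hz, (mem_orthogonal_range_iff p z).1 hz s])
    exact ext_inner_right 𝕜 fun z ↦ by
      simpa [adjoint_inner_left] using congrArg (fun f ↦ f z) this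

-- `p s + q s` is orthogonal to every `p t - q t`, so the reflection that negates the
-- differences `p t - q t` interchanges `p s` and `q s`.
theorem exists_involutive_isometry_map_eq (p q : S →ₗ[𝕜] E) (h_norm : ∀ s, ‖q s‖ = ‖p s‖)
    (h_inner : ∀ s t, ⟪p s, q t⟫_𝕜 = 0) :
    ∃ U : E →ₗᵢ[𝕜] E, Function.Involutive U ∧ ∀ s, U (p s) = q s := by
  let M := (p - q).range.topologicalClosure
  have : CompleteSpace M := (p - q).range.isClosed_topologicalClosure.completeSpace_coe
  refine ⟨Mᗮ.reflection.toLinearIsometry, Mᗮ.reflection_involutive, fun s ↦ ?_⟩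
  have sub_mem : p s - q s ∈ M := (p - q).range.le_topologicalClosure ⟨s, rfl⟩
  have add_mem : p s + q s ∈ Mᗮ := by
    rw [Submodule.orthogonal_closure, mem_orthogonal_range_iff]
    intro t
    simp [inner_sub_left, inner_add_right, h_inner, inner_eq_zero_symm.1 (h_inner _ _),
      inner_map_eq_of_norm_map_eq h_norm]
  have p_eq : p s = (2⁻¹ : 𝕜) • ((p s + q s) + (p s - q s)) := by module
  have q_eq : q s = (2⁻¹ : 𝕜) • ((p s + q s) + -(p s - q s)) := by module
  calc Mᗮ.reflection (p s)
      = (2⁻¹ : 𝕜) • (Mᗮ.reflection (p s + q s) + Mᗮ.reflection (p s - q s)) := by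
        rw [← map_add, ← map_smul, ← p_eq]
    _ = q s := by
        rw [Submodule.reflection_mem_subspace_eq_self add_mem,
          Submodule.reflection_mem_subspace_orthogonal_precomplement_eq_neg sub_mem, ← q_eq]

end RangeAndComplement

section DefectMap

variable {𝕜 H E : Type*} [RCLike 𝕜] [NormedAddCommGroup H] [InnerProductSpace 𝕜 H]
  [NormedAddCommGroup E] [InnerProductSpace 𝕜 E]

/-- `D` is a defect map of `T`: it represents the defect `‖h‖² - ‖T h‖²` as a square norm. This is
the property `D† D = 1 - T† T` of the defect operator `(1 - T† T)^(1/2)`, but `D` may take its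
values in any Hilbert space. -/
def IsDefectMap (T : H →L[𝕜] H) (D : H →L[𝕜] E) : Prop :=
  ∀ h, ‖D h‖ ^ 2 + ‖T h‖ ^ 2 = ‖h‖ ^ 2

end DefectMap

-- The positive operator `1 - T† T` is a one-point reproducing kernel, and the kernel function of
-- its Hilbert space is a defect map.
theorem exists_isDefectMap {𝕜 : Type u} {H : Type v} [RCLike 𝕜] [NormedAddCommGroup H]
    [InnerProductSpace 𝕜 H] [CompleteSpace H] (T : H →L[𝕜] H) (hT : ‖T‖ ≤ 1) :
    ∃ (E : Type (max u v)) (_ : NormedAddCommGroup E) (_ : InnerProductSpace 𝕜 E)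
      (_ : CompleteSpace E) (D : H →L[𝕜] E), IsDefectMap T D := by
  let K : Matrix Unit Unit (H →L[𝕜] H) := .of fun _ _ ↦ 1 - adjoint T ∘L T
  have K_inner (h : H) : ⟪K () () h, h⟫_𝕜 = ((‖h‖ ^ 2 - ‖T h‖ ^ 2 : ℝ) : 𝕜) := by
    simp [K, inner_sub_left, adjoint_inner_left, inner_self_eq_norm_sq_to_K]
  have K_hermitian : K.IsHermitian := by
    ext : 2
    simp [K, Matrix.conjTranspose_apply, star_eq_adjoint, adjoint_comp]
  have K_nonneg (s : Unit →₀ H) :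
      0 ≤ RCLike.re (s.sum fun x v ↦ s.sum fun y w ↦ ⟪K y x v, w⟫_𝕜) := by
    obtain ⟨h, rfl⟩ : ∃ h, s = Finsupp.single () h := ⟨s (), Finsupp.unique_single s⟩
    rw [Finsupp.sum_single_index (by simp), Finsupp.sum_single_index (by simp), K_inner,
      RCLike.ofReal_re, sub_nonneg]
    gcongr
    exact T.le_of_opNorm_le_of_le hT le_rfl |>.trans_eq (one_mul _)
  have posSemidef_iff := (RKHS.posSemidef_tfae (K := K)).out 0 2
  have : Fact K.PosSemidef := ⟨posSemidef_iff.2 ⟨K_hermitian, K_nonneg⟩⟩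
  refine ⟨RKHS.OfKernel K, inferInstance, inferInstance, inferInstance,
    RKHS.kerFun (RKHS.OfKernel K) (), fun h ↦ ?_⟩
  have := RKHS.kernel_inner (RKHS.OfKernel K) () () h h
  rw [RKHS.OfKernel.kernel_ofKernel, K_inner, inner_self_eq_norm_sq_to_K] at this
  have : ‖h‖ ^ 2 - ‖T h‖ ^ 2 = ‖RKHS.kerFun (RKHS.OfKernel K) () h‖ ^ 2 := by exact_mod_cast this
  rw [← this, sub_add_cancel]

theorem exists_isDefectMap_pair_orthogonal {𝕜 : Type u} {H : Type v} [RCLike 𝕜]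
    [NormedAddCommGroup H] [InnerProductSpace 𝕜 H] [CompleteSpace H] (T₁ T₂ : H →L[𝕜] H)
    (hT₁ : ‖T₁‖ ≤ 1) (hT₂ : ‖T₂‖ ≤ 1) :
    ∃ (G : Type (max u v)) (_ : NormedAddCommGroup G) (_ : InnerProductSpace 𝕜 G)
      (_ : CompleteSpace G) (D₁ D₂ : H →L[𝕜] G),
      IsDefectMap T₁ D₁ ∧ IsDefectMap T₂ D₂ ∧ ∀ h k, ⟪D₁ h, D₂ k⟫_𝕜 = 0 := by
  obtain ⟨E₁, _, _, _, D₁, hD₁⟩ := exists_isDefectMap T₁ hT₁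
  obtain ⟨E₂, _, _, _, D₂, hD₂⟩ := exists_isDefectMap T₂ hT₂
  let toProd := (WithLp.prodContinuousLinearEquiv 2 𝕜 E₁ E₂).symm.toContinuousLinearMap
  refine ⟨WithLp 2 (E₁ × E₂), inferInstance, inferInstance, inferInstance,
    toProd ∘L D₁.prod 0, toProd ∘L (0 : H →L[𝕜] E₁).prod D₂, fun h ↦ ?_, fun h ↦ ?_, fun h k ↦ ?_⟩
  · simpa [toProd] using hD₁ h
  · simpa [toProd] using hD₂ h
  · simp [toProd, WithLp.prod_inner_apply]

theorem exists_involutive_isometry_map_defect {𝕜 H G : Type*} [RCLike 𝕜]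
    [NormedAddCommGroup H] [InnerProductSpace 𝕜 H]
    [NormedAddCommGroup G] [InnerProductSpace 𝕜 G] [CompleteSpace G]
    {T₁ T₂ : H →L[𝕜] H} {D₁ D₂ : H →L[𝕜] G}
    (hD₁ : IsDefectMap T₁ D₁) (hD₂ : IsDefectMap T₂ D₂) (hT : Commute T₁ T₂)
    (hD : ∀ h k, ⟪D₁ h, D₂ k⟫_𝕜 = 0) :
    ∃ U : WithLp 2 (G × G) →ₗᵢ[𝕜] WithLp 2 (G × G), Function.Involutive U ∧
      ∀ h, U (WithLp.toLp 2 (D₁ (T₂ h), D₂ h)) = WithLp.toLp 2 (D₂ (T₁ h), D₁ h) := by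
  let toProd := (WithLp.linearEquiv 2 𝕜 (G × G)).symm.toLinearMap
  refine exists_involutive_isometry_map_eq
    (toProd ∘ₗ (D₁ ∘L T₂).toLinearMap.prod D₂.toLinearMap)
    (toProd ∘ₗ (D₂ ∘L T₁).toLinearMap.prod D₁.toLinearMap) (fun h ↦ ?_) (fun h k ↦ ?_)
  · refine (sq_eq_sq₀ (norm_nonneg _) (norm_nonneg _)).1 ?_
    simp only [WithLp.prod_norm_sq_eq_of_L2]
    change ‖D₂ (T₁ h)‖ ^ 2 + ‖D₁ h‖ ^ 2 = ‖D₁ (T₂ h)‖ ^ 2 + ‖D₂ h‖ ^ 2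
    have hT_apply : T₁ (T₂ h) = T₂ (T₁ h) := congrArg (fun T ↦ T h) hT
    have := hD₁ (T₂ h)
    rw [hT_apply] at this
    linarith [hD₁ h, hD₂ h, hD₂ (T₁ h)]
  · simp [toProd, WithLp.prod_inner_apply, hD, inner_eq_zero_symm.1 (hD _ _)]

section HalfShift

/-- The half shift of a sequence of pairs: reading the pairs `(x n).fst, (x n).snd` one after the
other as a single sequence in `G`, it puts `a` in front. Two half shifts make a full shift. -/
def halfShift {G : Type*} (a : G) (x : ℕ → WithLp 2 (G × G)) (n : ℕ) : WithLp 2 (G × G) :=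
  WithLp.toLp 2 (n.casesOn a fun m ↦ (x m).snd, (x n).fst)

theorem halfShift_halfShift {G : Type*} (a b : G) (x : ℕ → WithLp 2 (G × G)) (n : ℕ) :
    halfShift a (halfShift b x) n = n.casesOn (WithLp.toLp 2 (a, b)) x := by
  cases n <;> rfl

variable {𝕜 H G : Type*} [RCLike 𝕜] [NormedAddCommGroup H] [InnerProductSpace 𝕜 H]
  [NormedAddCommGroup G] [InnerProductSpace 𝕜 G]

theorem halfShift_add (a b : G) (x y : ℕ → WithLp 2 (G × G)) :
    halfShift (a + b) (x + y) = halfShift a x + halfShift b y := by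
  funext n
  cases n <;> rfl

theorem halfShift_smul (c : 𝕜) (a : G) (x : ℕ → WithLp 2 (G × G)) :
    halfShift (c • a) (c • x) = c • halfShift a x := by
  funext n
  cases n <;> rfl

theorem hasSum_norm_sq_halfShift (a : G) {x : ℕ → WithLp 2 (G × G)} {c : ℝ}
    (hx : HasSum (fun n ↦ ‖x n‖ ^ 2) c) :
    HasSum (fun n ↦ ‖halfShift a x n‖ ^ 2) (‖a‖ ^ 2 + c) := by
  simp only [WithLp.prod_norm_sq_eq_of_L2] at hx ⊢
  have summable_fst : Summable fun n ↦ ‖(x n).fst‖ ^ 2 :=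
    hx.summable.of_nonneg_of_le (fun _ ↦ by positivity)
      fun _ ↦ le_add_of_nonneg_right (by positivity)
  have summable_snd : Summable fun n ↦ ‖(x n).snd‖ ^ 2 :=
    hx.summable.of_nonneg_of_le (fun _ ↦ by positivity)
      fun _ ↦ le_add_of_nonneg_left (by positivity)
  have hasSum_shifted_snd : HasSum (fun n ↦ ‖(halfShift a x n).fst‖ ^ 2)
      (‖a‖ ^ 2 + ∑' n, ‖(x n).snd‖ ^ 2) :=
    HasSum.zero_add summable_snd.hasSum
  rw [hx.unique (summable_fst.hasSum.add summable_snd.hasSum), add_left_comm, add_comm]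
  exact hasSum_shifted_snd.add summable_fst.hasSum

theorem hasSum_norm_sq_map_halfShift_map (U W : WithLp 2 (G × G) →ₗᵢ[𝕜] WithLp 2 (G × G)) (a : G)
    (x : lp (fun _ : ℕ ↦ WithLp 2 (G × G)) 2) :
    HasSum (fun n ↦ ‖U (halfShift a (W ∘ x) n)‖ ^ 2) (‖a‖ ^ 2 + ‖x‖ ^ 2) := by
  simp only [U.norm_map]
  refine hasSum_norm_sq_halfShift a ?_
  simpa [W.norm_map] using lp.hasSum_norm (by simp) x

/-- The half shift of `ℓ²(G × G)`, preceded and followed by the entrywise action of the isometries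
`W` and `U`. -/
noncomputable def lpHalfShift (U W : WithLp 2 (G × G) →ₗᵢ[𝕜] WithLp 2 (G × G)) (a : G)
    (x : lp (fun _ : ℕ ↦ WithLp 2 (G × G)) 2) : lp (fun _ : ℕ ↦ WithLp 2 (G × G)) 2 :=
  ⟨U ∘ halfShift a (W ∘ x),
    memℓp_gen (by simpa using (hasSum_norm_sq_map_halfShift_map U W a x).summable)⟩

section lpHalfShift

variable (U W : WithLp 2 (G × G) →ₗᵢ[𝕜] WithLp 2 (G × G))

theorem norm_sq_lpHalfShift (a : G) (x : lp (fun _ : ℕ ↦ WithLp 2 (G × G)) 2) :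
    ‖lpHalfShift U W a x‖ ^ 2 = ‖a‖ ^ 2 + ‖x‖ ^ 2 := by
  have h := lp.hasSum_norm (by simp) (lpHalfShift U W a x)
  simp only [ENNReal.toReal_ofNat, Real.rpow_ofNat] at h
  exact h.unique (hasSum_norm_sq_map_halfShift_map U W a x)

theorem lpHalfShift_add (a b : G) (x y : lp (fun _ : ℕ ↦ WithLp 2 (G × G)) 2) :
    lpHalfShift U W (a + b) (x + y) = lpHalfShift U W a x + lpHalfShift U W b y := by
  have hW : W ∘ ⇑(x + y) = W ∘ x + W ∘ y := funext fun n ↦ map_add W _ _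
  refine Subtype.ext (funext fun n ↦ ?_)
  change U (halfShift (a + b) (W ∘ ⇑(x + y)) n) = _
  rw [hW, halfShift_add]
  exact map_add U _ _

theorem lpHalfShift_smul (c : 𝕜) (a : G) (x : lp (fun _ : ℕ ↦ WithLp 2 (G × G)) 2) :
    lpHalfShift U W (c • a) (c • x) = c • lpHalfShift U W a x := by
  have hW : W ∘ ⇑(c • x) = c • (W ∘ x) := funext fun n ↦ map_smul W _ _
  refine Subtype.ext (funext fun n ↦ ?_)
  change U (halfShift (c • a) (W ∘ ⇑(c • x)) n) = _
  rw [hW, halfShift_smul]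
  exact map_smul U _ _

end lpHalfShift

variable (H G) in
/-- The space `H ⊕ ℓ²(G × G)` on which contractions of `H` with a defect map into `G` dilate to
isometries by means of half shifts. -/
abbrev HalfShiftSpace : Type _ := WithLp 2 (H × lp (fun _ : ℕ ↦ WithLp 2 (G × G)) 2)

/-- The isometric dilation `(h, x) ↦ (T h, U (halfShift (D h) (W x)))` of `T`, where the half
shift absorbs the defect of `T`. -/
noncomputable def halfShiftDilation {T : H →L[𝕜] H} {D : H →L[𝕜] G} (hD : IsDefectMap T D)
    (U W : WithLp 2 (G × G) →ₗᵢ[𝕜] WithLp 2 (G × G)) :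
    HalfShiftSpace H G →ₗᵢ[𝕜] HalfShiftSpace H G where
  toFun z := WithLp.toLp 2 (T z.fst, lpHalfShift U W (D z.fst) z.snd)
  map_add' z z' := by simp [lpHalfShift_add, ← WithLp.toLp_add]
  map_smul' c z := by simp [lpHalfShift_smul, ← WithLp.toLp_smul]
  norm_map' z := by
    refine (sq_eq_sq₀ (norm_nonneg _) (norm_nonneg _)).1 ?_
    calc ‖WithLp.toLp 2 (T z.fst, lpHalfShift U W (D z.fst) z.snd)‖ ^ 2
        = ‖T z.fst‖ ^ 2 + ‖lpHalfShift U W (D z.fst) z.snd‖ ^ 2 :=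
          WithLp.prod_norm_sq_eq_of_L2 _
      _ = ‖D z.fst‖ ^ 2 + ‖T z.fst‖ ^ 2 + ‖z.snd‖ ^ 2 := by rw [norm_sq_lpHalfShift]; ring
      _ = ‖z‖ ^ 2 := by rw [hD, ← WithLp.prod_norm_sq_eq_of_L2]

theorem fst_halfShiftDilation {T : H →L[𝕜] H} {D : H →L[𝕜] G} (hD : IsDefectMap T D)
    (U W : WithLp 2 (G × G) →ₗᵢ[𝕜] WithLp 2 (G × G)) (z : HalfShiftSpace H G) :
    (halfShiftDilation hD U W z).fst = T z.fst := rfl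

theorem commute_halfShiftDilation {T₁ T₂ : H →L[𝕜] H} {D₁ D₂ : H →L[𝕜] G}
    (hD₁ : IsDefectMap T₁ D₁) (hD₂ : IsDefectMap T₂ D₂) (hT : Commute T₁ T₂)
    {U : WithLp 2 (G × G) →ₗᵢ[𝕜] WithLp 2 (G × G)} (hU : Function.Involutive U)
    (hU_defect : ∀ h, U (WithLp.toLp 2 (D₁ (T₂ h), D₂ h)) = WithLp.toLp 2 (D₂ (T₁ h), D₁ h)) :
    Function.Commute (halfShiftDilation hD₁ U .id) (halfShiftDilation hD₂ .id U) := by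
  intro z
  refine WithLp.ofLp_injective 2 (Prod.ext (congrArg (fun T ↦ T z.fst) hT) ?_)
  refine Subtype.ext (funext fun n ↦ ?_)
  change U (halfShift (D₁ (T₂ z.fst)) (halfShift (D₂ z.fst) (U ∘ z.snd)) n) =
    halfShift (D₂ (T₁ z.fst)) (U ∘ U ∘ halfShift (D₁ z.fst) z.snd) n
  rw [← Function.comp_assoc, hU.comp_self, Function.id_comp, halfShift_halfShift,
    halfShift_halfShift]
  cases n with
  | zero => exact hU_defect z.fst
  | succ n => exact hU (z.snd n)

end HalfShift

section CoisometricExtension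

variable {𝕜 H K : Type*} [RCLike 𝕜] [NormedAddCommGroup H] [InnerProductSpace 𝕜 H]
  [NormedAddCommGroup K] [InnerProductSpace 𝕜 K] [CompleteSpace K]

/-- `X` is a co-isometry on `K` that extends the operator `A` on `H`, where `H` is regarded as a
subspace of `K` by means of the embedding `e`. -/
structure IsCoisometricExtension (A : H →L[𝕜] H) (e : H →ₗᵢ[𝕜] K) (X : K →L[𝕜] K) : Prop where
  comp_adjoint : X ∘L adjoint X = 1
  apply_map : ∀ h, X (e h) = e (A h)

variable {A : H →L[𝕜] H} {e : H →ₗᵢ[𝕜] K} {X : K →L[𝕜] K}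

namespace IsCoisometricExtension

theorem apply_adjoint_apply (hX : IsCoisometricExtension A e X) (z : K) : X (adjoint X z) = z :=
  congrArg (fun T ↦ T z) hX.comp_adjoint

theorem norm_le_one (hX : IsCoisometricExtension A e X) : ‖X‖ ≤ 1 := by
  rw [← adjoint.norm_map X]
  have norm_adjoint : ∀ z, ‖adjoint X z‖ = ‖z‖ :=
    (norm_map_iff_adjoint_comp_self (adjoint X)).2 (by rw [adjoint_adjoint, hX.comp_adjoint])
  exact opNorm_le_bound _ zero_le_one fun z ↦ by rw [norm_adjoint, one_mul]

theorem norm_base_le_one (hX : IsCoisometricExtension A e X) : ‖A‖ ≤ 1 :=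
  opNorm_le_bound _ zero_le_one fun h ↦ by
    rw [← e.norm_map, ← hX.apply_map, ← e.norm_map h]
    exact X.le_of_opNorm_le hX.norm_le_one _

theorem of_adjoint_isometry (V : K →ₗᵢ[𝕜] K) (h : ∀ h z, ⟪e h, V z⟫_𝕜 = ⟪e (A h), z⟫_𝕜) :
    IsCoisometricExtension A e (adjoint V.toContinuousLinearMap) :=
  ⟨by rw [adjoint_adjoint, V.adjoint_comp_self],
    fun x ↦ ext_inner_right 𝕜 fun z ↦ by simp [adjoint_inner_left, h]⟩

end IsCoisometricExtension

end CoisometricExtension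

theorem exists_commute_isCoisometricExtension {𝕜 : Type u} {H : Type v} [RCLike 𝕜]
    [NormedAddCommGroup H] [InnerProductSpace 𝕜 H] [CompleteSpace H] {A B : H →L[𝕜] H}
    (hA : ‖A‖ ≤ 1) (hB : ‖B‖ ≤ 1) (hAB : Commute A B) :
    ∃ (K : Type (max u v)) (_ : NormedAddCommGroup K) (_ : InnerProductSpace 𝕜 K)
      (_ : CompleteSpace K) (e : H →ₗᵢ[𝕜] K) (X Y : K →L[𝕜] K),
      IsCoisometricExtension A e X ∧ IsCoisometricExtension B e Y ∧ Commute X Y := by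
  have norm_adjoint_le {T : H →L[𝕜] H} (hT : ‖T‖ ≤ 1) : ‖adjoint T‖ ≤ 1 := by
    rwa [adjoint.norm_map]
  obtain ⟨G, _, _, _, D₁, D₂, hD₁, hD₂, hD⟩ := exists_isDefectMap_pair_orthogonal
    (adjoint A) (adjoint B) (norm_adjoint_le hA) (norm_adjoint_le hB)
  obtain ⟨U, hU, hU_defect⟩ := exists_involutive_isometry_map_defect hD₁ hD₂ hAB.star_star hD
  let inl : H →ₗᵢ[𝕜] HalfShiftSpace H G :=
    ⟨(WithLp.linearEquiv 2 𝕜 _).symm.toLinearMap ∘ₗ LinearMap.inl 𝕜 _ _, fun h ↦ by simp⟩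
  have inner_inl (h : H) (z : HalfShiftSpace H G) : ⟪inl h, z⟫_𝕜 = ⟪h, z.fst⟫_𝕜 := by
    simp [inl, WithLp.prod_inner_apply]
  let V₁ := halfShiftDilation hD₁ U .id
  let V₂ := halfShiftDilation hD₂ .id U
  have hV : Commute V₁.toContinuousLinearMap V₂.toContinuousLinearMap :=
    ContinuousLinearMap.ext (commute_halfShiftDilation hD₁ hD₂ hAB.star_star hU hU_defect)
  refine ⟨HalfShiftSpace H G, inferInstance, inferInstance, inferInstance, inl,
    adjoint V₁.toContinuousLinearMap, adjoint V₂.toContinuousLinearMap,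
    .of_adjoint_isometry V₁ fun h z ↦ ?_, .of_adjoint_isometry V₂ fun h z ↦ ?_, hV.star_star⟩
  all_goals rw [inner_inl, inner_inl, fst_halfShiftDilation, adjoint_inner_right]

section MinimalPart

variable {𝕜 H K L : Type*} [RCLike 𝕜] [NormedAddCommGroup H] [InnerProductSpace 𝕜 H]
  [NormedAddCommGroup K] [InnerProductSpace 𝕜 K] [CompleteSpace K]
  [NormedAddCommGroup L] [InnerProductSpace 𝕜 L] [CompleteSpace L]
  {A : H →L[𝕜] H} {e : H →ₗᵢ[𝕜] K} {X : K →L[𝕜] K} {f : H →ₗᵢ[𝕜] L} {Y : L →L[𝕜] L}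

/-- The map `s ↦ ∑ n, X† ^ n (e (s n))`. The closure of its range is the minimal part of a
co-isometric extension `X`: the smallest subspace that contains `e H` and reduces `X`. -/
noncomputable def orbitSum (e : H →ₗᵢ[𝕜] K) (X : K →L[𝕜] K) : (ℕ →₀ H) →ₗ[𝕜] K :=
  Finsupp.lsum 𝕜 fun n ↦ (adjoint X ^ n).toLinearMap ∘ₗ e.toLinearMap

theorem orbitSum_single (e : H →ₗᵢ[𝕜] K) (X : K →L[𝕜] K) (n : ℕ) (h : H) :
    orbitSum e X (Finsupp.single n h) = (adjoint X ^ n) (e h) :=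
  Finsupp.lsum_single _ _ _ _

theorem adjoint_orbitSum (e : H →ₗᵢ[𝕜] K) (X : K →L[𝕜] K) (s : ℕ →₀ H) :
    adjoint X (orbitSum e X s) = orbitSum e X (Finsupp.lmapDomain H 𝕜 (· + 1) s) := by
  induction s using Finsupp.induction_linear with
  | zero => simp
  | add s t hs ht => simp only [map_add, hs, ht]
  | single n h => simp [orbitSum_single, pow_succ']

/-- The operator `(s 0, s 1, …) ↦ (A (s 0) + s 1, s 2, …)`, which is the action of a co-isometric
extension of `A` on its minimal part in the coordinates of `orbitSum`. -/
noncomputable def backwardShift (A : H →L[𝕜] H) : (ℕ →₀ H) →ₗ[𝕜] (ℕ →₀ H) :=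
  Finsupp.lsum 𝕜 fun n ↦
    n.casesOn (Finsupp.lsingle 0 ∘ₗ A.toLinearMap) fun m ↦ Finsupp.lsingle m

namespace IsCoisometricExtension

theorem apply_orbitSum (hX : IsCoisometricExtension A e X) (s : ℕ →₀ H) :
    X (orbitSum e X s) = orbitSum e X (backwardShift A s) := by
  induction s using Finsupp.induction_linear with
  | zero => simp
  | add s t hs ht => simp only [map_add, hs, ht]
  | single n h =>
    cases n with
    | zero => simp [backwardShift, orbitSum_single, hX.apply_map]
    | succ n => simp [backwardShift, orbitSum_single, pow_succ', hX.apply_adjoint_apply]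

theorem pow_apply_map (hX : IsCoisometricExtension A e X) (n : ℕ) (h : H) :
    (X ^ n) (e h) = e ((A ^ n) h) := by
  induction n generalizing h with
  | zero => rfl
  | succ n ih => simp [pow_succ, hX.apply_map, ih]

-- One of the two truncated differences is zero.
theorem inner_adjoint_pow_map (hX : IsCoisometricExtension A e X) (n m : ℕ) (h k : H) :
    ⟪(adjoint X ^ n) (e h), (adjoint X ^ m) (e k)⟫_𝕜 =
      ⟪(A ^ (m - n)) h, (A ^ (n - m)) k⟫_𝕜 := by
  induction n generalizing m with
  | zero =>
    rw [← star_eq_adjoint X, ← star_pow, ← star_pow, star_eq_adjoint (X ^ m), adjoint_inner_right]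
    simp [hX.pow_apply_map]
  | succ n ih =>
    cases m with
    | zero =>
      rw [← star_eq_adjoint X, ← star_pow, star_eq_adjoint (X ^ (n + 1)), adjoint_inner_left]
      simp [hX.pow_apply_map]
    | succ m =>
      rw [pow_succ', pow_succ', ContinuousLinearMap.mul_def, ContinuousLinearMap.mul_def,
        comp_apply, comp_apply, adjoint_inner_left, hX.apply_adjoint_apply, ih,
        Nat.add_sub_add_right, Nat.add_sub_add_right]

theorem inner_orbitSum (hX : IsCoisometricExtension A e X) (s t : ℕ →₀ H) :
    ⟪orbitSum e X s, orbitSum e X t⟫_𝕜 =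
      s.sum fun n h ↦ t.sum fun m k ↦ ⟪(A ^ (m - n)) h, (A ^ (n - m)) k⟫_𝕜 := by
  simp only [← hX.inner_adjoint_pow_map, orbitSum, Finsupp.lsum_apply, Finsupp.sum_inner,
    Finsupp.inner_sum]
  exact Finsupp.sum_comm _ _ _

theorem norm_orbitSum_eq (hX : IsCoisometricExtension A e X) (hY : IsCoisometricExtension A f Y)
    (s : ℕ →₀ H) : ‖orbitSum f Y s‖ = ‖orbitSum e X s‖ := by
  rw [norm_eq_sqrt_re_inner (𝕜 := 𝕜), norm_eq_sqrt_re_inner (𝕜 := 𝕜) (orbitSum e X s),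
    hX.inner_orbitSum, hY.inner_orbitSum]

theorem exists_intertwining_contraction (hX : IsCoisometricExtension A e X)
    (hY : IsCoisometricExtension A f Y) :
    ∃ C : K →L[𝕜] L, ‖C‖ ≤ 1 ∧ (∀ h, C (e h) = f h) ∧ (∀ h, adjoint C (f h) = e h) ∧
      C ∘L X = Y ∘L C ∧ C ∘L adjoint X = adjoint Y ∘L C := by
  obtain ⟨C, norm_C, C_orbitSum, adjoint_C_orbitSum, C_orthogonal⟩ :=
    exists_contraction_map_range_of_norm_eq (orbitSum e X) (orbitSum f Y) (hX.norm_orbitSum_eq hY)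
  have adjoint_mem {T : K →L[𝕜] K} {z : K} (hz : z ∈ (orbitSum e X).rangeᗮ)
      (σ : (ℕ →₀ H) → ℕ →₀ H) (hT : ∀ s, T (orbitSum e X s) = orbitSum e X (σ s)) :
      adjoint T z ∈ (orbitSum e X).rangeᗮ := by
    rw [mem_orthogonal_range_iff] at hz ⊢
    exact fun s ↦ by rw [adjoint_inner_right, hT, hz]
  refine ⟨C, norm_C, fun h ↦ ?_, fun h ↦ ?_, ?_, ?_⟩
  · simpa [orbitSum_single] using C_orbitSum (Finsupp.single 0 h)
  · simpa [orbitSum_single] using adjoint_C_orbitSum (Finsupp.single 0 h)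
  · refine eq_of_eqOn_range_of_eqOn_orthogonal (orbitSum e X) (fun s ↦ ?_) (fun z hz ↦ ?_)
    · simp only [comp_apply, hX.apply_orbitSum, C_orbitSum, hY.apply_orbitSum]
    · have hXz := adjoint_mem hz _ (adjoint_orbitSum e X)
      rw [adjoint_adjoint] at hXz
      rw [comp_apply, comp_apply, C_orthogonal z hz, C_orthogonal _ hXz, map_zero]
  · refine eq_of_eqOn_range_of_eqOn_orthogonal (orbitSum e X) (fun s ↦ ?_) (fun z hz ↦ ?_)
    · simp only [comp_apply, adjoint_orbitSum, C_orbitSum]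
    · have hXz := adjoint_mem hz _ hX.apply_orbitSum
      rw [comp_apply, comp_apply, C_orthogonal z hz, C_orthogonal _ hXz, map_zero]

end IsCoisometricExtension

end MinimalPart

theorem exists_commute_extension_norm_le {𝕜 H K : Type*} [RCLike 𝕜]
    [NormedAddCommGroup H] [InnerProductSpace 𝕜 H] [CompleteSpace H]
    [NormedAddCommGroup K] [InnerProductSpace 𝕜 K] [CompleteSpace K] {A B : H →L[𝕜] H}
    {e : H →ₗᵢ[𝕜] K} {X : K →L[𝕜] K} (hX : IsCoisometricExtension A e X) (hB : ‖B‖ ≤ 1)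
    (hAB : Commute A B) :
    ∃ B' : K →L[𝕜] K, ‖B'‖ ≤ 1 ∧ Commute X B' ∧ ∀ h, B' (e h) = e (B h) := by
  obtain ⟨L, _, _, _, f, X', Y', hX', hY', h_comm⟩ :=
    exists_commute_isCoisometricExtension hX.norm_base_le_one hB hAB
  obtain ⟨C, norm_C, C_map, adjoint_C_map, C_comp, C_comp_adjoint⟩ :=
    hX.exists_intertwining_contraction hX'
  have comp_adjoint_C : X ∘L adjoint C = adjoint C ∘L X' := by
    simpa [adjoint_comp] using congrArg adjoint C_comp_adjoint
  refine ⟨adjoint C ∘L Y' ∘L C, ?_, ?_, fun h ↦ ?_⟩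
  · have norm_adjoint_C : ‖adjoint C‖ ≤ 1 := by rwa [adjoint.norm_map]
    calc ‖adjoint C ∘L Y' ∘L C‖ ≤ ‖adjoint C‖ * (‖Y'‖ * ‖C‖) :=
          (opNorm_comp_le _ _).trans (by gcongr; exact opNorm_comp_le _ _)
      _ ≤ 1 := mul_le_one₀ norm_adjoint_C (by positivity)
          (mul_le_one₀ hY'.norm_le_one (norm_nonneg _) norm_C)
  · calc X ∘L adjoint C ∘L Y' ∘L C = (X ∘L adjoint C) ∘L Y' ∘L C := rfl
      _ = adjoint C ∘L (X' ∘L Y') ∘L C := by rw [comp_adjoint_C]; rfl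
      _ = adjoint C ∘L (Y' ∘L X') ∘L C := congrArg (adjoint C ∘L · ∘L C) h_comm
      _ = adjoint C ∘L Y' ∘L (X' ∘L C) := rfl
      _ = (adjoint C ∘L Y' ∘L C) ∘L X := by rw [← C_comp]; rfl
  · simp only [comp_apply, C_map, hY'.apply_map, adjoint_C_map]

theorem weak_commutant_lifting_general {𝕜 : Type u} {H : Type v} {Kt : Type w} [RCLike 𝕜]
    [NormedAddCommGroup H] [InnerProductSpace 𝕜 H] [CompleteSpace H]
    [NormedAddCommGroup Kt] [InnerProductSpace 𝕜 Kt] [CompleteSpace Kt]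
    (A B : H →L[𝕜] H) (hB : ‖B‖ ≤ 1) (hAB : Commute A B) (e : H →ₗᵢ[𝕜] Kt) (Xt : Kt →L[𝕜] Kt)
    (hXt : IsCoisometricExtension A e Xt) :
    ∃ (K : Type (max u w)) (_ : NormedAddCommGroup K) (_ : InnerProductSpace 𝕜 K)
      (_ : CompleteSpace K) (emb : Kt →ₗᵢ[𝕜] K) (X Y : K →L[𝕜] K),
      IsCoisometricExtension Xt emb X ∧ IsCoisometricExtension B (emb.comp e) Y ∧
        Commute X Y := by
  obtain ⟨B', norm_B', h_comm, B'_map⟩ := exists_commute_extension_norm_le hXt hB hAB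
  obtain ⟨K, _, _, _, emb, X, Y, hX, hY, hXY⟩ :=
    exists_commute_isCoisometricExtension hXt.norm_le_one norm_B' h_comm
  exact ⟨K, _, _, ‹_›, emb, X, Y, hX, ⟨hY.comp_adjoint, fun h ↦ by simp [hY.apply_map, B'_map]⟩,
    hXY⟩

/-- Weak commutant lifting (Lemma 2.1): if `A, B` are commuting contractions on `H`
and `X̃` is a co-isometric extension of `A` on `K̃ ⊇ H`, then there is a Hilbert space
`K ⊇ K̃` and commuting co-isometries `X, Y` on `K` with `X` extending `X̃` and `Y`
extending `B`. -/
theorem weak_commutant_lifting {H Kt : Type}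
    [NormedAddCommGroup H] [InnerProductSpace ℂ H] [CompleteSpace H]
    [NormedAddCommGroup Kt] [InnerProductSpace ℂ Kt] [CompleteSpace Kt]
    (A B : H →L[ℂ] H) (hA : ‖A‖ ≤ 1) (hB : ‖B‖ ≤ 1) (hAB : A ∘L B = B ∘L A)
    (e : H →ₗᵢ[ℂ] Kt) (Xt : Kt →L[ℂ] Kt)
    (hXt : Xt ∘L ContinuousLinearMap.adjoint Xt = 1)
    (hXtA : ∀ x : H, Xt (e x) = e (A x)) :
    Nonempty (CommutantLift B e Xt) := by
  obtain ⟨K, _, _, _, emb, X, Y, hX, hY, hXY⟩ :=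
    weak_commutant_lifting_general A B hB hAB e Xt ⟨hXt, hXtA⟩
  exact ⟨⟨K, emb, X, Y, hX.comp_adjoint, hY.comp_adjoint, hXY, hX.apply_map, hY.apply_map⟩⟩
end

section
/- (Lemma 2.2) Let G be an acyclic graph on vertices {1,...,n} and A₁,...,Aₙ ∈ B(H) contractions that commute according to G. Then there exists a Hilbert space K ⊇ H and co-isometries X₁,...,Xₙ ∈ B(K) commuting according to G such that Xⱼ extends Aⱼ for each j. -/
open ContinuousLinearMap

/-- Data witnessing the conclusion of Lemma 2.2: a Hilbert space `K ⊇ H` and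
co-isometries `X₁, …, Xₙ` on `K` commuting according to the graph `G` such that
`Xⱼ` extends `Aⱼ` for each `j`. -/
structure GraphCoisometricExtension {n : ℕ} {H : Type}
    [NormedAddCommGroup H] [InnerProductSpace ℂ H] [CompleteSpace H]
    (G : SimpleGraph (Fin n)) (A : Fin n → H →L[ℂ] H) where
  K : Type
  [grp : NormedAddCommGroup K]
  [ips : InnerProductSpace ℂ K]
  [cpl : CompleteSpace K]
  emb : H →ₗᵢ[ℂ] K
  X : Fin n → K →L[ℂ] K
  coisometry : ∀ j, X j ∘L ContinuousLinearMap.adjoint (X j) = 1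
  commute : ∀ i j, G.Adj i j → X i ∘L X j = X j ∘L X i
  extend : ∀ (j) (x : H), X j (emb x) = emb (A j x)

/-!
Passing to the adjoints `Tⱼ = Aⱼ†`, it suffices to find isometries `Vⱼ` on some `K ⊇ H` that lift
the `Tⱼ` (that is, `P Vⱼ = Tⱼ P` for the projection `P` of `K` onto `H`) and commute along the
edges of `G`: then the co-isometries `Xⱼ = Vⱼ†` extend the `Aⱼ`.

Every nonempty induced subgraph of an acyclic graph has a vertex `v` with at most one neighbour `w`
in it, so the vertices can be added one at a time, each with at most one neighbour already present.
Commutant lifting yields a contraction `Y` on `K` that lifts `T_v` and commutes with `V_w`, and `Y`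
dilates to an isometry on a larger space `K ⊕ R` that commutes with `V_w ⊕ U` for a suitable
isometry `U` of `R`. The neighbours of `v` are extended by `U` and all other vertices by the
identity of `R`; since powers of `U` commute with each other, no earlier relation is destroyed.
-/

universe u

open scoped InnerProduct ENNReal

section Graph

variable {ι : Type*} {G : SimpleGraph ι}

theorem exists_subsingleton_neighborSet [Nonempty ι] [Finite G.edgeSet] (hG : G.IsAcyclic) :
    ∃ v, (G.neighborSet v).Subsingleton := by
  obtain ⟨v, _, p, hp, hmax⟩ :=
    SimpleGraph.Walk.exists_isPath_forall_isPath_length_le_length G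
  have mem_support {w : ι} (hw : G.Adj v w) : w ∈ p.support := by
    by_contra hwp
    have := hmax _ _ (p.cons hw.symm) (hp.cons hwp)
    simp at this
  exact ⟨v, fun w hw w' hw' ↦ (hG.eq_snd_of_adj_start hp hw (mem_support hw)).trans
    (hG.eq_snd_of_adj_start hp hw' (mem_support hw')).symm⟩

theorem acyclic_finset_induction [DecidableEq ι] (hG : G.IsAcyclic) {P : Finset ι → Prop}
    (empty : P ∅)
    (insert : ∀ v (s : Finset ι), v ∉ s → (G.neighborSet v ∩ s).Subsingleton → P s →
      P (insert v s))
    (s : Finset ι) : P s := by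
  induction s using Finset.strongInduction with
  | H s ih =>
    obtain rfl | hs := s.eq_empty_or_nonempty
    · exact empty
    have : Nonempty (s : Set ι) := hs.to_subtype
    obtain ⟨⟨v, hv⟩, hleaf⟩ := exists_subsingleton_neighborSet (hG.induce (s : Set ι))
    rw [← Finset.insert_erase hv]
    refine insert v _ (Finset.notMem_erase v s) ?_ (ih _ (Finset.erase_ssubset hv))
    rintro i ⟨hvi, hi⟩ j ⟨hvj, hj⟩
    have mem_s {k : ι} (hk : k ∈ s.erase v) : k ∈ s := Finset.mem_of_mem_erase hk
    exact congrArg Subtype.val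
      (hleaf (x := ⟨i, mem_s hi⟩) hvi (y := ⟨j, mem_s hj⟩) hvj)

end Graph

variable {𝕜 : Type*} [RCLike 𝕜]

section DouglasFactorization

variable {K E F : Type*} [NormedAddCommGroup K] [NormedSpace 𝕜 K] [NormedAddCommGroup E]
  [NormedAddCommGroup F] [NormedSpace 𝕜 F]

theorem norm_apply_le_of_norm_le_one {X : K →L[𝕜] F} (hX : ‖X‖ ≤ 1) (k : K) : ‖X k‖ ≤ ‖k‖ := by
  simpa using X.le_of_opNorm_le hX k

theorem denseRange_codRestrict_topologicalClosure [NormedSpace 𝕜 E] (a : K →L[𝕜] E) :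
    DenseRange (a.codRestrict a.range.topologicalClosure
      fun k ↦ Submodule.le_topologicalClosure _ ⟨k, rfl⟩) := by
  rw [DenseRange, Subtype.dense_iff, ← Set.range_comp]
  exact subset_rfl

theorem exists_contraction_comp_eq [InnerProductSpace 𝕜 E] [CompleteSpace E] [CompleteSpace F]
    (a : K →L[𝕜] E) (b : K →L[𝕜] F) (h : ∀ k, ‖b k‖ ≤ ‖a k‖) :
    ∃ w : E →L[𝕜] F, ‖w‖ ≤ 1 ∧ ∀ k, w (a k) = b k := by
  let S := a.range.topologicalClosure
  let a' : K →L[𝕜] S := a.codRestrict S fun k ↦ Submodule.le_topologicalClosure _ ⟨k, rfl⟩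
  have hdense : DenseRange a'.toLinearMap := denseRange_codRestrict_topologicalClosure a
  have hbound (k : K) : ‖b k‖ ≤ 1 * ‖a' k‖ := by
    rw [one_mul]; exact h k
  refine ⟨b.toLinearMap.extendOfNorm a'.toLinearMap ∘L S.orthogonalProjectionOnto,
    opNorm_le_bound _ zero_le_one fun x ↦ ?_, fun k ↦ ?_⟩
  · calc
      _ ≤ 1 * ‖S.orthogonalProjectionOnto x‖ :=
        LinearMap.norm_extendOfNorm_apply_le hdense 1 hbound _
      _ ≤ 1 * ‖x‖ := by gcongr; exact S.norm_orthogonalProjectionOnto_apply_le x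
  · have hproj : S.orthogonalProjectionOnto (a k) = a' k :=
      S.orthogonalProjectionOnto_mem_subspace_eq_self (a' k)
    rw [comp_apply, hproj]
    exact LinearMap.extendOfNorm_eq hdense ⟨1, hbound⟩ k

theorem exists_linearIsometry_comp_eq [NormedSpace 𝕜 E] [CompleteSpace F]
    {a : K →L[𝕜] E} (ha : DenseRange a) (b : K →L[𝕜] F)
    (h : ∀ k, ‖b k‖ = ‖a k‖) : ∃ w : E →ₗᵢ[𝕜] F, ∀ k, w (a k) = b k := by
  have hbound (k : K) : ‖b k‖ ≤ 1 * ‖a k‖ := by rw [one_mul, h]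
  let w : E →L[𝕜] F := b.toLinearMap.extendOfNorm a.toLinearMap
  have hw (k : K) : w (a k) = b k := LinearMap.extendOfNorm_eq ha ⟨1, hbound⟩ k
  refine ⟨⟨w.toLinearMap, fun x ↦ ?_⟩, hw⟩
  induction x using ha.induction_on with
  | hp => exact isClosed_eq (by fun_prop) (by fun_prop)
  | ih k => exact (congrArg norm (hw k)).trans (h k)

theorem exists_contraction_pair_comp_eq {F' : Type*} [NormedAddCommGroup F'] [NormedSpace 𝕜 F']
    [InnerProductSpace 𝕜 E] [CompleteSpace E] [CompleteSpace F] [CompleteSpace F']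
    (a : K →L[𝕜] E) (b : K →L[𝕜] F) (b' : K →L[𝕜] F')
    (h : ∀ k, ‖b k‖ ^ 2 + ‖b' k‖ ^ 2 ≤ ‖a k‖ ^ 2) :
    ∃ (w : E →L[𝕜] F) (w' : E →L[𝕜] F'), (∀ x, ‖w x‖ ^ 2 + ‖w' x‖ ^ 2 ≤ ‖x‖ ^ 2) ∧
      (∀ k, w (a k) = b k) ∧ ∀ k, w' (a k) = b' k := by
  let B : K →L[𝕜] WithLp 2 (F × F') :=
    (WithLp.prodContinuousLinearEquiv 2 𝕜 F F').symm.toContinuousLinearMap ∘L b.prod b'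
  have hB (k : K) : ‖B k‖ ≤ ‖a k‖ := by
    rw [← sq_le_sq₀ (norm_nonneg _) (norm_nonneg _), WithLp.prod_norm_sq_eq_of_L2]
    exact h k
  obtain ⟨W, hW, hWB⟩ := exists_contraction_comp_eq a B hB
  refine ⟨WithLp.fstL 2 𝕜 F F' ∘L W, WithLp.sndL 2 𝕜 F F' ∘L W, fun x ↦ ?_,
    fun k ↦ congrArg WithLp.fst (hWB k), fun k ↦ congrArg WithLp.snd (hWB k)⟩
  calc
    _ = ‖W x‖ ^ 2 := (WithLp.prod_norm_sq_eq_of_L2 (W x)).symm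
    _ ≤ ‖x‖ ^ 2 := by gcongr; exact norm_apply_le_of_norm_le_one hW x

end DouglasFactorization

section Defect

theorem exists_hausdorff_completion {V : Type u} [AddCommGroup V] [Module 𝕜 V]
    (c : PreInnerProductSpace.Core 𝕜 V) :
    ∃ (E : Type u) (_ : NormedAddCommGroup E) (_ : InnerProductSpace 𝕜 E) (_ : CompleteSpace E)
      (D : V →ₗ[𝕜] E), DenseRange D ∧ ∀ x, ‖D x‖ ^ 2 = RCLike.re (c.inner x x) := by
  let : SeminormedAddCommGroup V := InnerProductSpace.Core.toSeminormedAddCommGroup (𝕜 := 𝕜)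
  let : InnerProductSpace 𝕜 V := .ofCore c
  refine ⟨UniformSpace.Completion V, inferInstance, inferInstance, inferInstance,
    (UniformSpace.Completion.toComplL (𝕜 := 𝕜) (E := V)).toLinearMap,
    UniformSpace.Completion.denseRange_coe, fun x ↦ ?_⟩
  exact (congrArg (· ^ 2) (UniformSpace.Completion.norm_coe x)).trans
    (InnerProductSpace.norm_sq_eq_re_inner x)

variable {K : Type u} [NormedAddCommGroup K] [InnerProductSpace 𝕜 K]
  {F : Type*} [NormedAddCommGroup F] [InnerProductSpace 𝕜 F]

theorem exists_defect_operator {X : K →L[𝕜] F} (hX : ‖X‖ ≤ 1) :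
    ∃ (E : Type u) (_ : NormedAddCommGroup E) (_ : InnerProductSpace 𝕜 E) (_ : CompleteSpace E)
      (D : K →L[𝕜] E), DenseRange D ∧ ∀ k, ‖X k‖ ^ 2 + ‖D k‖ ^ 2 = ‖k‖ ^ 2 := by
  let c : PreInnerProductSpace.Core 𝕜 K :=
    { inner x y := inner 𝕜 x y - inner 𝕜 (X x) (X y)
      conj_inner_symm x y := by simp
      re_inner_nonneg x := by
        have := norm_apply_le_of_norm_le_one hX x
        simp only [map_sub, inner_self_eq_norm_sq, sub_nonneg]
        gcongr
      add_left x y z := by simp only [map_add, inner_add_left]; ring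
      smul_left x y r := by simp only [map_smul, inner_smul_left]; ring }
  obtain ⟨E, _, _, _, D, hdense, hD⟩ := exists_hausdorff_completion c
  have hD (k : K) : ‖D k‖ ^ 2 = RCLike.re (inner 𝕜 k k - inner 𝕜 (X k) (X k)) := hD k
  have norm_sq (k : K) : ‖X k‖ ^ 2 + ‖D k‖ ^ 2 = ‖k‖ ^ 2 := by
    rw [hD, map_sub, inner_self_eq_norm_sq, inner_self_eq_norm_sq]
    ring
  have hbound (k : K) : ‖D k‖ ≤ 1 * ‖k‖ := by
    rw [one_mul, ← sq_le_sq₀ (norm_nonneg _) (norm_nonneg _), ← norm_sq k]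
    exact le_add_of_nonneg_left (sq_nonneg _)
  exact ⟨E, _, _, ‹_›, D.mkContinuous 1 hbound, hdense, norm_sq⟩

end Defect

section ColumnIsometry

variable {K E F : Type*} [NormedAddCommGroup K] [NormedSpace 𝕜 K] [NormedAddCommGroup E]
  [NormedSpace 𝕜 E] [NormedAddCommGroup F] [NormedSpace 𝕜 F]

/-- The isometry `k ↦ (X k, D k)` into the Hilbert sum `F ⊕ E`, for operators with
`‖X k‖² + ‖D k‖² = ‖k‖²`. -/
noncomputable def columnIsometry (X : K →L[𝕜] F) (D : K →L[𝕜] E)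
    (h : ∀ k, ‖X k‖ ^ 2 + ‖D k‖ ^ 2 = ‖k‖ ^ 2) : K →ₗᵢ[𝕜] WithLp 2 (F × E) where
  toLinearMap := (WithLp.linearEquiv 2 𝕜 (F × E)).symm.toLinearMap ∘ₗ (X.prod D).toLinearMap
  norm_map' k := by
    rw [← sq_eq_sq₀ (norm_nonneg _) (norm_nonneg _), WithLp.prod_norm_sq_eq_of_L2]
    exact h k

theorem columnIsometry_apply (X : K →L[𝕜] F) (D : K →L[𝕜] E)
    (h : ∀ k, ‖X k‖ ^ 2 + ‖D k‖ ^ 2 = ‖k‖ ^ 2) (k : K) :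
    columnIsometry X D h k = WithLp.toLp 2 (X k, D k) :=
  rfl

end ColumnIsometry

section SquareSummable

variable {ι : Type*} {E : Type*} [NormedAddCommGroup E]

theorem memℓp_two_iff_summable_norm_sq {f : ι → E} :
    Memℓp f 2 ↔ Summable fun i ↦ ‖f i‖ ^ 2 := by
  simp [memℓp_gen_iff (p := 2) (by norm_num) (f := f)]

theorem hasSum_norm_sq_lp_two (f : lp (fun _ : ι ↦ E) 2) :
    HasSum (fun i ↦ ‖f i‖ ^ 2) (‖f‖ ^ 2) := by
  simpa using lp.hasSum_norm (p := 2) (by norm_num) f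

/-- The diagonal isometry `(fᵢ)ᵢ ↦ (Tᵢ fᵢ)ᵢ` between `ℓᵖ` spaces. -/
noncomputable def lpMapIsometry {E F : ι → Type*} [∀ i, NormedAddCommGroup (E i)]
    [∀ i, NormedSpace 𝕜 (E i)] [∀ i, NormedAddCommGroup (F i)] [∀ i, NormedSpace 𝕜 (F i)]
    (p : ℝ≥0∞) [Fact (1 ≤ p)] (T : ∀ i, E i →ₗᵢ[𝕜] F i) : lp E p →ₗᵢ[𝕜] lp F p where
  toLinearMap := lp.mapCLM p (fun i ↦ (T i).toContinuousLinearMap) zero_le_one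
    fun i ↦ (T i).norm_toContinuousLinearMap_le
  norm_map' f := by
    have hp : p ≠ 0 := (zero_lt_one.trans_le Fact.out).ne'
    exact (lp.norm_mono hp fun i ↦ ((T i).norm_map (f i)).le).antisymm
      (lp.norm_mono hp fun i ↦ ((T i).norm_map (f i)).ge)

/-- The isometry `(e, (f₀, f₁, …)) ↦ (e, f₀, f₁, …)` of `E ⊕ ℓ²(E)` into `ℓ²(E)`. -/
noncomputable def l2ConsIsometry (𝕜 E : Type*) [RCLike 𝕜] [NormedAddCommGroup E]
    [NormedSpace 𝕜 E] :
    WithLp 2 (E × lp (fun _ : ℕ ↦ E) 2) →ₗᵢ[𝕜] lp (fun _ : ℕ ↦ E) 2 where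
  toFun z := ⟨Nat.rec z.fst fun n _ ↦ z.snd n, memℓp_two_iff_summable_norm_sq.2 <| by
    rw [← summable_nat_add_iff 1]
    exact (hasSum_norm_sq_lp_two z.snd).summable⟩
  map_add' z z' := by ext (_ | n) <;> rfl
  map_smul' c z := by ext (_ | n) <;> rfl
  norm_map' z := by
    rw [← sq_eq_sq₀ (norm_nonneg _) (norm_nonneg _), WithLp.prod_norm_sq_eq_of_L2, add_comm]
    refine (hasSum_norm_sq_lp_two _).unique ?_
    rw [← hasSum_nat_add_iff' 1]
    simpa using hasSum_norm_sq_lp_two z.snd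

variable [NormedSpace 𝕜 E]

theorem lpMapIsometry_l2ConsIsometry (u : E →ₗᵢ[𝕜] E)
    (z : WithLp 2 (E × lp (fun _ : ℕ ↦ E) 2)) :
    lpMapIsometry 2 (fun _ ↦ u) (l2ConsIsometry 𝕜 E z) =
      l2ConsIsometry 𝕜 E (u.withLpProdMap 2 (lpMapIsometry 2 fun _ ↦ u) z) := by
  ext (_ | n) <;> rfl

theorem exists_observability_operator {L : Type*} [NormedAddCommGroup L] [NormedSpace 𝕜 L]
    (w₁ : E →L[𝕜] E) (w₂ : E →L[𝕜] L) (hw : ∀ x, ‖w₁ x‖ ^ 2 + ‖w₂ x‖ ^ 2 ≤ ‖x‖ ^ 2) :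
    ∃ F : E →L[𝕜] lp (fun _ : ℕ ↦ L) 2, ‖F‖ ≤ 1 ∧ ∀ x n, F x n = w₂ ((w₁ ^ n) x) := by
  have partial_sum_add_le (x : E) (N : ℕ) :
      ∑ n ∈ Finset.range N, ‖w₂ ((w₁ ^ n) x)‖ ^ 2 + ‖(w₁ ^ N) x‖ ^ 2 ≤ ‖x‖ ^ 2 := by
    induction N with
    | zero => simp
    | succ N ih =>
      rw [Finset.sum_range_succ, pow_succ' w₁, mul_apply_eq_comp]
      linarith [hw ((w₁ ^ N) x)]
  have partial_sum_le (x : E) (N : ℕ) :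
      ∑ n ∈ Finset.range N, ‖w₂ ((w₁ ^ n) x)‖ ^ 2 ≤ ‖x‖ ^ 2 :=
    (le_add_of_nonneg_right (sq_nonneg _)).trans (partial_sum_add_le x N)
  let F : E →ₗ[𝕜] lp (fun _ : ℕ ↦ L) 2 :=
    { toFun x := ⟨fun n ↦ w₂ ((w₁ ^ n) x), memℓp_two_iff_summable_norm_sq.2 <|
        summable_of_sum_range_le (fun _ ↦ sq_nonneg _) (partial_sum_le x)⟩
      map_add' x y := by ext n; simp only [map_add]; rfl
      map_smul' c x := by ext n; simp only [map_smul]; rfl }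
  have norm_F_le (x : E) : ‖F x‖ ≤ 1 * ‖x‖ := by
    rw [one_mul, ← sq_le_sq₀ (norm_nonneg _) (norm_nonneg _),
      ← (hasSum_norm_sq_lp_two (F x)).tsum_eq]
    exact Real.tsum_le_of_sum_range_le (fun _ ↦ sq_nonneg _) (partial_sum_le x)
  exact ⟨F.mkContinuous 1 norm_F_le, F.mkContinuous_norm_le zero_le_one _, fun _ _ ↦ rfl⟩

end SquareSummable

section WanderingSubspace

variable {K : Type*} [NormedAddCommGroup K] [InnerProductSpace 𝕜 K]
  {V : K →ₗᵢ[𝕜] K} {N : Submodule 𝕜 K}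

/-- The subspace `N ⊖ V N`; for an isometry `V` that maps `N` into itself, its translates under
the powers of `V` are mutually orthogonal subspaces of `N`. -/
def wanderingSubspace (V : K →ₗᵢ[𝕜] K) (N : Submodule 𝕜 K) : Submodule 𝕜 K :=
  N ⊓ (N.map V.toLinearMap)ᗮ

theorem isClosed_wanderingSubspace (hN : IsClosed (N : Set K)) :
    IsClosed (wanderingSubspace V N : Set K) :=
  hN.inter (Submodule.isClosed_orthogonal _)

theorem pow_apply_mem_of_invariant (hV : ∀ k ∈ N, V k ∈ N) (n : ℕ) {k : K} (hk : k ∈ N) :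
    (V ^ n) k ∈ N := by
  induction n with
  | zero => exact hk
  | succ n ih => rw [pow_succ']; exact hV _ ih

theorem inner_pow_add_pow_wanderingSubspace (hV : ∀ k ∈ N, V k ∈ N) (m d : ℕ) {x y : K}
    (hx : x ∈ wanderingSubspace V N) (hy : y ∈ wanderingSubspace V N) :
    inner 𝕜 ((V ^ (m + d + 1)) x) ((V ^ m) y) = 0 := by
  rw [add_assoc, pow_add, LinearIsometry.coe_mul, Function.comp_apply,
    LinearIsometry.inner_map_map, pow_succ']
  exact hy.2 _ (Submodule.mem_map_of_mem (pow_apply_mem_of_invariant hV d hx.1))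

theorem orthogonalFamily_pow_wanderingSubspace (hV : ∀ k ∈ N, V k ∈ N) :
    OrthogonalFamily 𝕜 (fun _ : ℕ ↦ wanderingSubspace V N)
      fun n ↦ (V ^ n).comp (wanderingSubspace V N).subtypeₗᵢ := by
  intro i j hij x y
  obtain h | h := hij.lt_or_gt
  · obtain ⟨d, rfl⟩ := Nat.exists_eq_add_of_lt h
    exact inner_eq_zero_symm.1 (inner_pow_add_pow_wanderingSubspace hV i d y.2 x.2)
  · obtain ⟨d, rfl⟩ := Nat.exists_eq_add_of_lt h
    exact inner_pow_add_pow_wanderingSubspace hV j d x.2 y.2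

-- The solution is `Z = ∑ₙ Vⁿ w₂ w₁ⁿ`.
theorem exists_contraction_eq_add_isometry_comp [CompleteSpace K] {E : Type*}
    [NormedAddCommGroup E] [NormedSpace 𝕜 E] (hN : IsClosed (N : Set K))
    (hV : ∀ k ∈ N, V k ∈ N) (w₁ : E →L[𝕜] E) (w₂ : E →L[𝕜] wanderingSubspace V N)
    (hw : ∀ x, ‖w₁ x‖ ^ 2 + ‖w₂ x‖ ^ 2 ≤ ‖x‖ ^ 2) :
    ∃ Z : E →L[𝕜] K, ‖Z‖ ≤ 1 ∧ (∀ x, Z x ∈ N) ∧ ∀ x, Z x = w₂ x + V (Z (w₁ x)) := by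
  obtain ⟨F, hF, hF_apply⟩ := exists_observability_operator w₁ w₂ hw
  let J := (orthogonalFamily_pow_wanderingSubspace hV).linearIsometry
  have hasSum_Z (x : E) : HasSum (fun n ↦ (V ^ n) (w₂ ((w₁ ^ n) x) : K)) (J (F x)) := by
    simpa [hF_apply] using
      (orthogonalFamily_pow_wanderingSubspace hV).hasSum_linearIsometry (F x)
  refine ⟨J.toContinuousLinearMap ∘L F, ?_, fun x ↦ ?_, fun x ↦ ?_⟩
  · exact (J.norm_toContinuousLinearMap_comp).trans_le hF
  · exact hN.mem_of_tendsto (hasSum_Z x) <| .of_forall fun s ↦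
      N.sum_mem fun n _ ↦ pow_apply_mem_of_invariant hV n (w₂ _).2.1
  · have tail : HasSum (fun n ↦ (V ^ (n + 1)) (w₂ ((w₁ ^ (n + 1)) x) : K)) (V (J (F (w₁ x)))) := by
      simpa [pow_succ' V, pow_succ w₁] using V.toContinuousLinearMap.hasSum (hasSum_Z (w₁ x))
    refine (hasSum_Z x).unique ?_
    rw [← hasSum_nat_add_iff' 1]
    simpa using tail

end WanderingSubspace

section IsometricLift

variable {H K : Type*} [NormedAddCommGroup H] [InnerProductSpace 𝕜 H] [CompleteSpace H]
  [NormedAddCommGroup K] [InnerProductSpace 𝕜 K] [CompleteSpace K]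
  {emb : H →ₗᵢ[𝕜] K} {T : H →L[𝕜] H} {V : K →ₗᵢ[𝕜] K}

/-- `V` is an isometric lift of `T` along the embedding `emb : H → K`: the projection `emb†` of `K`
onto `H` intertwines `V` with `T`. Equivalently, the co-isometry `V†` extends `T†`. -/
def IsIsometricLift (emb : H →ₗᵢ[𝕜] K) (T : H →L[𝕜] H) (V : K →ₗᵢ[𝕜] K) : Prop :=
  ∀ k, (emb.toContinuousLinearMap†) (V k) = T ((emb.toContinuousLinearMap†) k)

theorem adjoint_isometry_apply_self (emb : H →ₗᵢ[𝕜] K) (x : H) :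
    (emb.toContinuousLinearMap†) (emb x) = x :=
  DFunLike.congr_fun emb.adjoint_comp_self x

theorem norm_sq_isometry_apply_add {z : K} (hz : (emb.toContinuousLinearMap†) z = 0) (x : H) :
    ‖emb x + z‖ ^ 2 = ‖x‖ ^ 2 + ‖z‖ ^ 2 := by
  have orthogonal : inner 𝕜 (emb x) z = 0 :=
    (adjoint_inner_right emb.toContinuousLinearMap x z).symm.trans (by rw [hz, inner_zero_right])
  simpa [sq] using norm_add_sq_eq_norm_sq_add_norm_sq_of_inner_eq_zero _ _ orthogonal

namespace IsIsometricLift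

variable (hV : IsIsometricLift emb T V)
include hV

theorem adjoint_apply (x : H) : (V.toContinuousLinearMap†) (emb x) = emb ((T†) x) := by
  refine ext_inner_right 𝕜 fun k ↦ ?_
  calc
    inner 𝕜 ((V.toContinuousLinearMap†) (emb x)) k = inner 𝕜 (emb x) (V k) :=
      adjoint_inner_left _ _ _
    _ = inner 𝕜 x ((emb.toContinuousLinearMap†) (V k)) :=
      (adjoint_inner_right emb.toContinuousLinearMap _ _).symm
    _ = inner 𝕜 ((T†) x) ((emb.toContinuousLinearMap†) k) := by rw [hV, adjoint_inner_left]
    _ = inner 𝕜 (emb ((T†) x)) k := adjoint_inner_right _ _ _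

theorem adjoint_isometry_apply_sub (x : H) :
    (emb.toContinuousLinearMap†) (V (emb x) - emb (T x)) = 0 := by
  rw [map_sub, hV, adjoint_isometry_apply_self, adjoint_isometry_apply_self, sub_self]

theorem sub_mem_wanderingSubspace (x : H) :
    V (emb x) - emb (T x) ∈ wanderingSubspace V (emb.toContinuousLinearMap†).ker := by
  refine ⟨hV.adjoint_isometry_apply_sub x, ?_⟩
  rintro _ ⟨z, hz, rfl⟩
  have hz : (emb.toContinuousLinearMap†) z = 0 := hz
  have inner_emb (y : H) (k : K) :
      inner 𝕜 k (emb y) = inner 𝕜 ((emb.toContinuousLinearMap†) k) y :=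
    (adjoint_inner_left emb.toContinuousLinearMap y k).symm
  calc
    inner 𝕜 (V z) (V (emb x) - emb (T x))
      = inner 𝕜 z (emb x) - inner 𝕜 (V z) (emb (T x)) := by
        rw [inner_sub_right, V.inner_map_map]
    _ = 0 := by
      rw [inner_emb, inner_emb, hV, hz, map_zero, inner_zero_left, inner_zero_left, sub_zero]

theorem norm_sq_apply_add_norm_sq_sub (x : H) :
    ‖T x‖ ^ 2 + ‖V (emb x) - emb (T x)‖ ^ 2 = ‖x‖ ^ 2 := by
  rw [← norm_sq_isometry_apply_add (hV.adjoint_isometry_apply_sub x), add_sub_cancel,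
    V.norm_map, emb.norm_map]

variable {K₁ : Type*} [NormedAddCommGroup K₁] [InnerProductSpace 𝕜 K₁] {V₁ : K₁ →ₗᵢ[𝕜] K₁}
  {X : K₁ →L[𝕜] H}

-- The recursion for `Z` is what `emb ∘ X + Z ∘ D` must satisfy in order to intertwine `V₁` and `V`.
theorem exists_contraction_correcting {E : Type*} [NormedAddCommGroup E] [InnerProductSpace 𝕜 E]
    [CompleteSpace E] {D : K₁ →L[𝕜] E} (hXV : ∀ k, X (V₁ k) = T (X k))
    (hD : ∀ k, ‖X k‖ ^ 2 + ‖D k‖ ^ 2 = ‖k‖ ^ 2) :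
    ∃ Z : E →L[𝕜] K, ‖Z‖ ≤ 1 ∧ (∀ x, (emb.toContinuousLinearMap†) (Z x) = 0) ∧
      ∀ k, Z (D (V₁ k)) = V (emb (X k)) - emb (T (X k)) + V (Z (D k)) := by
  let P := emb.toContinuousLinearMap†
  let M := wanderingSubspace V P.ker
  have : CompleteSpace M :=
    (isClosed_wanderingSubspace P.isClosed_ker).completeSpace_coe
  let L : H →L[𝕜] M := (V.toContinuousLinearMap ∘L emb.toContinuousLinearMap -
    emb.toContinuousLinearMap ∘L T).codRestrict M hV.sub_mem_wanderingSubspace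
  have norm_sq_le (k : K₁) : ‖D k‖ ^ 2 + ‖L (X k)‖ ^ 2 ≤ ‖D (V₁ k)‖ ^ 2 := by
    have hDV := hD (V₁ k)
    have hL : ‖T (X k)‖ ^ 2 + ‖L (X k)‖ ^ 2 = ‖X k‖ ^ 2 := hV.norm_sq_apply_add_norm_sq_sub (X k)
    rw [V₁.norm_map, hXV] at hDV
    linarith [hD k]
  obtain ⟨w₁, w₂, hw, hw₁, hw₂⟩ :=
    exists_contraction_pair_comp_eq (D ∘L V₁.toContinuousLinearMap) D (L ∘L X) norm_sq_le
  obtain ⟨Z, hZ, hPZ, hZ_eq⟩ := exists_contraction_eq_add_isometry_comp P.isClosed_ker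
    (fun k hk ↦ (hV k).trans <| (congrArg T hk).trans (map_zero T)) w₁ w₂ hw
  refine ⟨Z, hZ, hPZ, fun k ↦ ?_⟩
  have hw₁ : w₁ (D (V₁ k)) = D k := hw₁ k
  have hw₂ : w₂ (D (V₁ k)) = L (X k) := hw₂ k
  rw [hZ_eq, hw₁, hw₂]
  rfl

theorem exists_intertwining_lift (hX : ‖X‖ ≤ 1) (hXV : ∀ k, X (V₁ k) = T (X k)) :
    ∃ Y : K₁ →L[𝕜] K, ‖Y‖ ≤ 1 ∧ (∀ k, Y (V₁ k) = V (Y k)) ∧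
      ∀ k, (emb.toContinuousLinearMap†) (Y k) = X k := by
  obtain ⟨E, _, _, _, D, -, hD⟩ := exists_defect_operator hX
  obtain ⟨Z, hZ, hPZ, hZDV⟩ := hV.exists_contraction_correcting hXV hD
  refine ⟨emb.toContinuousLinearMap ∘L X + Z ∘L D, opNorm_le_bound _ zero_le_one fun k ↦ ?_,
    fun k ↦ ?_, fun k ↦ ?_⟩
  · rw [one_mul, ← sq_le_sq₀ (norm_nonneg _) (norm_nonneg _)]
    calc
      ‖emb (X k) + Z (D k)‖ ^ 2 = ‖X k‖ ^ 2 + ‖Z (D k)‖ ^ 2 := norm_sq_isometry_apply_add (hPZ _) _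
      _ ≤ ‖X k‖ ^ 2 + ‖D k‖ ^ 2 := by gcongr; exact norm_apply_le_of_norm_le_one hZ _
      _ = ‖k‖ ^ 2 := hD k
  · calc
      emb (X (V₁ k)) + Z (D (V₁ k)) = V (emb (X k)) + V (Z (D k)) := by
        rw [hXV, hZDV]; abel
      _ = V (emb (X k) + Z (D k)) := (map_add V _ _).symm
  · change (emb.toContinuousLinearMap†) (emb (X k) + Z (D k)) = X k
    rw [map_add, adjoint_isometry_apply_self, hPZ, add_zero]

end IsIsometricLift

end IsometricLift

section IsometricDilation

theorem exists_commuting_isometric_dilation {K : Type u} [NormedAddCommGroup K]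
    [InnerProductSpace 𝕜 K] (V : K →ₗᵢ[𝕜] K) {Y : K →L[𝕜] K} (hY : ‖Y‖ ≤ 1)
    (hYV : ∀ k, Y (V k) = V (Y k)) :
    ∃ (R : Type u) (_ : NormedAddCommGroup R) (_ : InnerProductSpace 𝕜 R) (_ : CompleteSpace R)
      (U : R →ₗᵢ[𝕜] R) (W : WithLp 2 (K × R) →ₗᵢ[𝕜] WithLp 2 (K × R)),
      Commute W (V.withLpProdMap 2 U) ∧ ∀ z, (W z).fst = Y z.fst := by
  obtain ⟨E, _, _, _, D, hdense, hD⟩ := exists_defect_operator hY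
  have norm_D_V (k : K) : ‖D (V k)‖ = ‖D k‖ := by
    have hDV := hD (V k)
    rw [hYV, V.norm_map, V.norm_map, ← hD k] at hDV
    exact (sq_eq_sq₀ (norm_nonneg _) (norm_nonneg _)).1 (add_left_cancel hDV)
  obtain ⟨u, hu⟩ :=
    exists_linearIsometry_comp_eq hdense (D ∘L V.toContinuousLinearMap) norm_D_V
  let U := lpMapIsometry 2 fun _ : ℕ ↦ u
  let W : WithLp 2 (K × lp (fun _ : ℕ ↦ E) 2) →ₗᵢ[𝕜] WithLp 2 (K × lp (fun _ : ℕ ↦ E) 2) :=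
    ((LinearIsometry.id.withLpProdMap 2 (l2ConsIsometry 𝕜 E)).comp
      (LinearIsometryEquiv.withLpProdAssoc 2 𝕜 K E _).toLinearIsometry).comp
      ((columnIsometry Y D hD).withLpProdMap 2 .id)
  refine ⟨lp (fun _ : ℕ ↦ E) 2, inferInstance, inferInstance, inferInstance, U, W,
    LinearIsometry.ext fun z ↦ ?_, fun _ ↦ rfl⟩
  have hfst : Y (V z.fst) = V (Y z.fst) := hYV _
  have hsnd : l2ConsIsometry 𝕜 E (WithLp.toLp 2 (D (V z.fst), U z.snd)) =
      U (l2ConsIsometry 𝕜 E (WithLp.toLp 2 (D z.fst, z.snd))) := by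
    rw [lpMapIsometry_l2ConsIsometry]
    exact congrArg (fun e ↦ l2ConsIsometry 𝕜 E (WithLp.toLp 2 (e, U z.snd))) (hu _).symm
  exact congrArg₂ (fun k r ↦ WithLp.toLp 2 (k, r)) hfst hsnd

end IsometricDilation

section SumLift

variable {H K : Type*} {R : Type*} [NormedAddCommGroup H] [InnerProductSpace 𝕜 H] [CompleteSpace H]
  [NormedAddCommGroup K] [InnerProductSpace 𝕜 K] [CompleteSpace K]
  [NormedAddCommGroup R] [InnerProductSpace 𝕜 R] [CompleteSpace R]

/-- The embedding of `H` into the first summand of `K ⊕ R` induced by an embedding of `H` into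
`K`. -/
noncomputable def sumEmbedding (R : Type*) [NormedAddCommGroup R] [InnerProductSpace 𝕜 R]
    (emb : H →ₗᵢ[𝕜] K) : H →ₗᵢ[𝕜] WithLp 2 (K × R) :=
  columnIsometry emb.toContinuousLinearMap 0 (by simp)

theorem adjoint_sumEmbedding_apply (emb : H →ₗᵢ[𝕜] K) (z : WithLp 2 (K × R)) :
    ((sumEmbedding R emb).toContinuousLinearMap†) z = (emb.toContinuousLinearMap†) z.fst := by
  refine ext_inner_left 𝕜 fun x ↦ ?_
  rw [adjoint_inner_right, adjoint_inner_right]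
  simp [sumEmbedding, columnIsometry_apply]

theorem IsIsometricLift.withLpProdMap {emb : H →ₗᵢ[𝕜] K} {T : H →L[𝕜] H} {V : K →ₗᵢ[𝕜] K}
    (hV : IsIsometricLift emb T V) (U : R →ₗᵢ[𝕜] R) :
    IsIsometricLift (sumEmbedding R emb) T (V.withLpProdMap 2 U) := fun z ↦ by
  rw [adjoint_sumEmbedding_apply, adjoint_sumEmbedding_apply]
  exact hV z.fst

theorem IsIsometricLift.exists_commuting_lift {K : Type u} [NormedAddCommGroup K]
    [InnerProductSpace 𝕜 K] [CompleteSpace K] {emb : H →ₗᵢ[𝕜] K} {T S : H →L[𝕜] H}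
    {V : K →ₗᵢ[𝕜] K} (hV : IsIsometricLift emb T V) (hS : ‖S‖ ≤ 1) (hST : Commute S T) :
    ∃ (R : Type u) (_ : NormedAddCommGroup R) (_ : InnerProductSpace 𝕜 R) (_ : CompleteSpace R)
      (U : R →ₗᵢ[𝕜] R) (W : WithLp 2 (K × R) →ₗᵢ[𝕜] WithLp 2 (K × R)),
      Commute W (V.withLpProdMap 2 U) ∧ IsIsometricLift (sumEmbedding R emb) S W := by
  let P := emb.toContinuousLinearMap†
  have norm_SP : ‖S ∘L P‖ ≤ 1 := by
    refine opNorm_le_bound _ zero_le_one fun k ↦ ?_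
    have norm_P : ‖P‖ ≤ 1 :=
      (LinearIsometryEquiv.norm_map adjoint _).trans_le emb.norm_toContinuousLinearMap_le
    rw [one_mul]
    exact (norm_apply_le_of_norm_le_one hS _).trans (norm_apply_le_of_norm_le_one norm_P k)
  have SP_intertwines (k : K) : (S ∘L P) (V k) = T ((S ∘L P) k) :=
    (congrArg S (hV k)).trans (DFunLike.congr_fun hST.eq (P k))
  obtain ⟨Y, hY, hYV, hPY⟩ := hV.exists_intertwining_lift norm_SP SP_intertwines
  obtain ⟨R, _, _, _, U, W, hWU, hW⟩ := exists_commuting_isometric_dilation V hY hYV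
  refine ⟨R, _, _, ‹_›, U, W, hWU, fun z ↦ ?_⟩
  rw [adjoint_sumEmbedding_apply, adjoint_sumEmbedding_apply, hW]
  exact hPY z.fst

end SumLift

section GraphLift

variable {ι : Type*} {G : SimpleGraph ι} {H : Type u} [NormedAddCommGroup H]
  [InnerProductSpace 𝕜 H] [CompleteSpace H] {T : ι → H →L[𝕜] H}

/-- Isometries on a common Hilbert space `K ⊇ H` that lift the operators `T j` with `j ∈ s` and
commute along the edges of `G` inside `s`; the isometries `V j` with `j ∉ s` are arbitrary. -/
structure GraphIsometricLift (G : SimpleGraph ι) (T : ι → H →L[𝕜] H) (s : Finset ι) where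
  K : Type u
  [normedAddCommGroup : NormedAddCommGroup K]
  [innerProductSpace : InnerProductSpace 𝕜 K]
  [completeSpace : CompleteSpace K]
  emb : H →ₗᵢ[𝕜] K
  V : ι → K →ₗᵢ[𝕜] K
  commute : ∀ i ∈ s, ∀ j ∈ s, G.Adj i j → Commute (V i) (V j)
  lift : ∀ j ∈ s, IsIsometricLift emb (T j) (V j)

namespace GraphIsometricLift

attribute [instance] normedAddCommGroup innerProductSpace completeSpace

theorem exists_lift_eq_on_neighbors {v : ι} {s : Finset ι} (L : GraphIsometricLift G T s)
    (hleaf : (G.neighborSet v ∩ s).Subsingleton)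
    (hT : ∀ j, G.Adj v j → Commute (T v) (T j)) :
    ∃ (T₀ : H →L[𝕜] H) (V₀ : L.K →ₗᵢ[𝕜] L.K), IsIsometricLift L.emb T₀ V₀ ∧ Commute (T v) T₀ ∧
      ∀ j ∈ s, G.Adj v j → L.V j = V₀ := by
  obtain hempty | ⟨w, hvw, hws⟩ := (G.neighborSet v ∩ s).eq_empty_or_nonempty
  · exact ⟨1, 1, fun _ ↦ rfl, .one_right _, fun j hj hvj ↦
      (Set.eq_empty_iff_forall_notMem.1 hempty j ⟨hvj, hj⟩).elim⟩
  · exact ⟨T w, L.V w, L.lift w hws, hT w hvw, fun j hj hvj ↦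
      congrArg L.V (hleaf ⟨hvj, hj⟩ ⟨hvw, hws⟩)⟩

theorem nonempty_insert [DecidableEq ι] {v : ι} {s : Finset ι} (hv : v ∉ s)
    (hleaf : (G.neighborSet v ∩ s).Subsingleton) (hTv : ‖T v‖ ≤ 1)
    (hT : ∀ j, G.Adj v j → Commute (T v) (T j)) (L : GraphIsometricLift G T s) :
    Nonempty (GraphIsometricLift G T (insert v s)) := by
  classical
  obtain ⟨T₀, V₀, hlift₀, hcomm₀, hV₀⟩ := L.exists_lift_eq_on_neighbors hleaf hT
  obtain ⟨R, _, _, _, U, W, hWU, hW⟩ := hlift₀.exists_commuting_lift hTv hcomm₀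
  let U' (j : ι) : R →ₗᵢ[𝕜] R := if G.Adj v j then U else 1
  have commute_U' (i j : ι) : Commute (U' i) (U' j) := by
    by_cases hi : G.Adj v i <;> by_cases hj : G.Adj v j <;> simp [U', hi, hj]
  let V' (j : ι) := if j = v then W else (L.V j).withLpProdMap 2 (U' j)
  have V'_self : V' v = W := if_pos rfl
  have V'_of_mem {j : ι} (hj : j ∈ s) : V' j = (L.V j).withLpProdMap 2 (U' j) :=
    if_neg (ne_of_mem_of_not_mem hj hv)
  have commute_W {j : ι} (hj : j ∈ s) (hvj : G.Adj v j) : Commute (V' v) (V' j) := by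
    rw [V'_self, V'_of_mem hj, hV₀ j hj hvj, show U' j = U from if_pos hvj]
    exact hWU
  refine ⟨⟨_, sumEmbedding R L.emb, V', ?_, ?_⟩⟩
  · simp only [Finset.forall_mem_insert]
    refine ⟨⟨fun h ↦ (G.irrefl h).elim, fun j hj hvj ↦ commute_W hj hvj⟩, fun i hi ↦
      ⟨fun hiv ↦ (commute_W hi hiv.symm).symm, fun j hj hij ↦ ?_⟩⟩
    rw [V'_of_mem hi, V'_of_mem hj]
    exact LinearIsometry.ext fun z ↦ congrArg₂ (fun k r ↦ WithLp.toLp 2 (k, r))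
      (DFunLike.congr_fun (L.commute i hi j hj hij) z.fst)
      (DFunLike.congr_fun (commute_U' i j) z.snd)
  · simp only [Finset.forall_mem_insert]
    refine ⟨V'_self ▸ hW, fun j hj ↦ ?_⟩
    rw [V'_of_mem hj]
    exact (L.lift j hj).withLpProdMap _

theorem nonempty_of_isAcyclic (hG : G.IsAcyclic) (hT : ∀ j, ‖T j‖ ≤ 1)
    (hcomm : ∀ i j, G.Adj i j → Commute (T i) (T j)) (s : Finset ι) :
    Nonempty (GraphIsometricLift G T s) := by
  classical
  induction s using acyclic_finset_induction hG with
  | empty => exact ⟨⟨H, .id, fun _ ↦ .id, by simp, by simp⟩⟩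
  | insert v s hv hleaf ih =>
    obtain ⟨L⟩ := ih
    exact L.nonempty_insert hv hleaf (hT v) (hcomm v)

end GraphIsometricLift

end GraphLift

theorem acyclic_coisometric_extension_general {ι : Type*} [Finite ι] {H : Type u}
    [NormedAddCommGroup H] [InnerProductSpace 𝕜 H] [CompleteSpace H]
    (G : SimpleGraph ι) (hG : G.IsAcyclic) (A : ι → H →L[𝕜] H) (hA : ∀ j, ‖A j‖ ≤ 1)
    (hcomm : ∀ i j, G.Adj i j → A i ∘L A j = A j ∘L A i) :
    ∃ (K : Type u) (_ : NormedAddCommGroup K) (_ : InnerProductSpace 𝕜 K) (_ : CompleteSpace K)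
      (emb : H →ₗᵢ[𝕜] K) (X : ι → K →L[𝕜] K),
      (∀ j, X j ∘L X j† = 1) ∧ (∀ i j, G.Adj i j → X i ∘L X j = X j ∘L X i) ∧
      ∀ j x, X j (emb x) = emb (A j x) := by
  cases nonempty_fintype ι
  have norm_adjoint_le (j : ι) : ‖A j†‖ ≤ 1 :=
    (LinearIsometryEquiv.norm_map adjoint _).trans_le (hA j)
  have adjoint_commute (i j : ι) (hij : G.Adj i j) : Commute (A i†) (A j†) :=
    Commute.star_star (hcomm i j hij)
  obtain ⟨@⟨K, _, _, _, emb, V, hV, hlift⟩⟩ :=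
    GraphIsometricLift.nonempty_of_isAcyclic hG norm_adjoint_le adjoint_commute Finset.univ
  have commute_V (i j : ι) (hij : G.Adj i j) :
      Commute (V i).toContinuousLinearMap (V j).toContinuousLinearMap :=
    ContinuousLinearMap.ext fun k ↦
      DFunLike.congr_fun (hV i (Finset.mem_univ i) j (Finset.mem_univ j) hij).eq k
  refine ⟨K, _, _, ‹_›, emb, fun j ↦ (V j).toContinuousLinearMap†, fun j ↦ ?_, fun i j hij ↦
    (commute_V i j hij).star_star.eq, fun j x ↦ ?_⟩
  · rw [adjoint_adjoint, (V j).adjoint_comp_self]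
  · rw [(hlift j (Finset.mem_univ j)).adjoint_apply, adjoint_adjoint]

/-- Lemma 2.2: if `G` is an acyclic graph on `{1, …, n}` and `A₁, …, Aₙ` are
contractions on `H` commuting according to `G`, then there is a Hilbert space
`K ⊇ H` and co-isometries `X₁, …, Xₙ` on `K` commuting according to `G` such
that `Xⱼ` extends `Aⱼ` for each `j`. -/
theorem acyclic_coisometric_extension {n : ℕ} {H : Type}
    [NormedAddCommGroup H] [InnerProductSpace ℂ H] [CompleteSpace H]
    (G : SimpleGraph (Fin n)) (hG : G.IsAcyclic)
    (A : Fin n → H →L[ℂ] H) (hA : ∀ j, ‖A j‖ ≤ 1)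
    (hcomm : ∀ i j, G.Adj i j → A i ∘L A j = A j ∘L A i) :
    Nonempty (GraphCoisometricExtension G A) := by
  obtain ⟨K, _, _, _, emb, X, hX, hXcomm, hext⟩ :=
    acyclic_coisometric_extension_general G hG A hA hcomm
  exact ⟨⟨K, emb, X, hX, hXcomm, hext⟩⟩
end

section
/- (Lemma 2.2, isometric version) Let G be an acyclic graph on {1,...,n} and A₁,...,Aₙ ∈ B(H) isometries commuting according to G. Then there exists K ⊇ H and unitaries X₁,...,Xₙ ∈ B(K) commuting according to G with Xⱼ extending Aⱼ for each j. -/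
open ContinuousLinearMap

/-- Data witnessing the isometric version of Lemma 2.2: a Hilbert space `K ⊇ H` and
unitaries `X₁, …, Xₙ` on `K` commuting according to the graph `G` such that
`Xⱼ` extends `Aⱼ` for each `j`. -/
structure GraphUnitaryExtension {n : ℕ} {H : Type}
    [NormedAddCommGroup H] [InnerProductSpace ℂ H] [CompleteSpace H]
    (G : SimpleGraph (Fin n)) (A : Fin n → H →L[ℂ] H) where
  K : Type
  [grp : NormedAddCommGroup K]
  [ips : InnerProductSpace ℂ K]
  [cpl : CompleteSpace K]
  emb : H →ₗᵢ[ℂ] K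
  X : Fin n → K →L[ℂ] K
  unitary_right : ∀ j, X j ∘L ContinuousLinearMap.adjoint (X j) = 1
  unitary_left : ∀ j, ContinuousLinearMap.adjoint (X j) ∘L X j = 1
  commute : ∀ i j, G.Adj i j → X i ∘L X j = X j ∘L X i
  extend : ∀ (j) (x : H), X j (emb x) = emb (A j x)

/-!
Vertices are adjoined one at a time, each adjacent to at most one vertex `u` already present; such
an order exists because a finite forest has a vertex of degree at most one. Suppose the unitary `W`
on `K ⊇ H` extends `A u` and the isometry `A v` commutes with `A u`. If `E` extends `A v` by the
identity on `Hᗮ`, the isometries `W⁻ⁿ E Wⁿ` converge strongly to an isometry `C` which still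
extends `A v` and commutes with `W`. The Halmos dilation of `C` on `K ⊕ K` is then a unitary
extending `C`; since `C†` commutes with `W` as well, it commutes with `W ⊕ W`.
-/

open Filter Topology
open Function (Semiconj)

universe u

local notation:max f:max "†" => ContinuousLinearMap.adjoint (LinearIsometry.toContinuousLinearMap f)

theorem exists_subsingleton_neighborSet_of_isAcyclic {V : Type*} [Nonempty V] {G : SimpleGraph V}
    [Finite G.edgeSet] (hG : G.IsAcyclic) : ∃ v, (G.neighborSet v).Subsingleton := by
  obtain ⟨u, v, p, hp, hmax⟩ := SimpleGraph.Walk.exists_isPath_forall_isPath_length_le_length G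
  refine ⟨v, Set.subsingleton_of_forall_eq p.penultimate fun w (hvw : G.Adj v w) => ?_⟩
  refine hG.eq_penultimate_of_adj_end hp hvw (by_contra fun hw => ?_)
  have hle := hmax _ _ _ (hp.concat hw hvw)
  rw [SimpleGraph.Walk.length_concat] at hle
  omega

theorem exists_mem_subsingleton_neighborSet_inter_of_isAcyclic {V : Type*} {G : SimpleGraph V}
    (hG : G.IsAcyclic) {s : Set V} (hs : s.Finite) (hne : s.Nonempty) :
    ∃ v ∈ s, (G.neighborSet v ∩ s).Subsingleton := by
  have := hs.to_subtype
  have := hne.to_subtype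
  obtain ⟨v, hv⟩ := exists_subsingleton_neighborSet_of_isAcyclic (hG.induce s)
  refine ⟨v, v.2, fun a ha b hb => ?_⟩
  exact congrArg Subtype.val (@hv ⟨a, ha.2⟩ ha.1 ⟨b, hb.2⟩ hb.1)

/-- The subspace of all `x` at which the linear maps `F i` converge along `l`. -/
def convergenceSubmodule {ι R E E' : Type*} [Semiring R] [AddCommMonoid E] [Module R E]
    [AddCommMonoid E'] [Module R E'] [TopologicalSpace E'] [ContinuousAdd E']
    [ContinuousConstSMul R E'] (F : ι → E →ₗ[R] E') (l : Filter ι) : Submodule R E where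
  carrier := {x | ∃ y, Tendsto (fun i => F i x) l (𝓝 y)}
  add_mem' := by
    rintro a b ⟨a', ha⟩ ⟨b', hb⟩
    exact ⟨a' + b', by simpa using ha.add hb⟩
  zero_mem' := ⟨0, by simpa using tendsto_const_nhds⟩
  smul_mem' := by
    rintro c a ⟨a', ha⟩
    exact ⟨c • a', by simpa using ha.const_smul c⟩

theorem cauchy_map_of_dense_setOf_tendsto {ι α β : Type*} [PseudoMetricSpace α]
    [PseudoMetricSpace β] {l : Filter ι} [l.NeBot] {F : ι → α → β} (hF : ∀ i, Isometry (F i))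
    (hd : Dense {x | ∃ y, Tendsto (fun i => F i x) l (𝓝 y)}) (x : α) :
    Cauchy (map (fun i => F i x) l) := by
  refine Metric.cauchy_iff.2 ⟨inferInstance, fun ε hε => ?_⟩
  obtain ⟨x', ⟨y, hy⟩, hx'⟩ := hd.exists_dist_lt x (half_pos (half_pos hε))
  refine ⟨Metric.ball y (ε / 2), ?_, fun a ha b hb => ?_⟩
  · rw [mem_map]
    filter_upwards [Metric.tendsto_nhds.1 hy (ε / 2 / 2) (by positivity)] with i hi
    calc dist (F i x) y ≤ dist (F i x) (F i x') + dist (F i x') y := dist_triangle ..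
      _ < ε / 2 / 2 + ε / 2 / 2 := by rw [(hF i).dist_eq]; gcongr
      _ = ε / 2 := add_halves _
  · calc dist a b ≤ dist a y + dist b y := dist_triangle_right ..
      _ < ε / 2 + ε / 2 := add_lt_add ha hb
      _ = ε := add_halves _

theorem exists_linearIsometry_tendsto_of_dense {ι 𝕜 E E' : Type*} [NormedField 𝕜]
    [SeminormedAddCommGroup E] [NormedSpace 𝕜 E] [NormedAddCommGroup E'] [NormedSpace 𝕜 E']
    [CompleteSpace E'] {l : Filter ι} [l.NeBot] (F : ι → E →ₗᵢ[𝕜] E')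
    (hd : Dense (convergenceSubmodule (fun i => (F i).toLinearMap) l : Set E)) :
    ∃ C : E →ₗᵢ[𝕜] E', ∀ x, Tendsto (fun i => F i x) l (𝓝 (C x)) := by
  choose C hC using fun x => cauchy_map_iff_exists_tendsto.1
    (cauchy_map_of_dense_setOf_tendsto (fun i => (F i).isometry) hd x)
  let C' := linearMapOfTendsto C (fun i => (F i).toLinearMap) (tendsto_pi_nhds.2 hC)
  refine ⟨⟨C', fun x => tendsto_nhds_unique (hC x).norm ?_⟩, hC⟩
  simp

section Conjugation

variable {R H K : Type*} [Semiring R] [SeminormedAddCommGroup H] [Module R H]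
  [SeminormedAddCommGroup K] [Module R K]

/-- The conjugates `W⁻ⁿ E Wⁿ` of an isometry `E` by the powers of a unitary `W`. -/
def conjPow (W : K ≃ₗᵢ[R] K) (E : K →ₗᵢ[R] K) (n : ℕ) : K →ₗᵢ[R] K :=
  (W ^ n).symm.toLinearIsometry.comp (E.comp (W ^ n).toLinearIsometry)

theorem conjPow_apply (W : K ≃ₗᵢ[R] K) (E : K →ₗᵢ[R] K) (n : ℕ) (x : K) :
    conjPow W E n x = (W ^ n).symm (E ((W ^ n) x)) := rfl

theorem conjPow_apply_map (W : K ≃ₗᵢ[R] K) (E : K →ₗᵢ[R] K) (n : ℕ) (x : K) :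
    conjPow W E n (W x) = W (conjPow W E (n + 1) x) := by
  rw [conjPow_apply, conjPow_apply, pow_succ]
  exact (W.apply_symm_apply _).symm

theorem semiconj_pow {f : H →ₗᵢ[R] K} {B : H →ₗᵢ[R] H} {W : K ≃ₗᵢ[R] K} (h : Semiconj f B W)
    (n : ℕ) : Semiconj f ⇑(B ^ n) ⇑(W ^ n) := by
  have hWn : ⇑(W ^ n) = W^[n] := hom_coe_pow _ rfl (fun _ _ => rfl) W n
  rw [LinearIsometry.coe_pow, hWn]
  exact h.iterate_right n

theorem conjPow_add_apply_symm {f : H →ₗᵢ[R] K} {A B : H →ₗᵢ[R] H} {E : K →ₗᵢ[R] K}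
    {W : K ≃ₗᵢ[R] K} (hE : Semiconj f A E) (hW : Semiconj f B W) (hAB : Function.Commute A B)
    (n m : ℕ) (x : H) :
    conjPow W E (n + m) ((W ^ m).symm (f x)) = (W ^ m).symm (f (A x)) := by
  have hABn : A ((B ^ n) x) = (B ^ n) (A x) := by
    rw [LinearIsometry.coe_pow]
    exact hAB.iterate_right n x
  have hWn : (W ^ (n + m)) ((W ^ m).symm (f x)) = (W ^ n) (f x) := by
    simp [pow_add]
  rw [conjPow_apply, hWn, ← semiconj_pow hW n, ← hE, hABn, semiconj_pow hW n,
    LinearIsometryEquiv.symm_apply_eq, pow_add, LinearIsometryEquiv.coe_mul, Function.comp_apply,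
    LinearIsometryEquiv.apply_symm_apply]

end Conjugation

section L2Sum

variable {𝕜 E F : Type*} [NormedField 𝕜] [SeminormedAddCommGroup E] [NormedSpace 𝕜 E]
  [SeminormedAddCommGroup F] [NormedSpace 𝕜 F]

variable (𝕜 E F) in
/-- The isometric embedding of `E` as the first summand of the `L²` sum of `E` and `F`. -/
noncomputable def fstEmbedding : E →ₗᵢ[𝕜] WithLp 2 (E × F) where
  toLinearMap := (WithLp.linearEquiv 2 𝕜 (E × F)).symm.toLinearMap ∘ₗ LinearMap.inl 𝕜 E F
  norm_map' := WithLp.norm_toLp_fst 2 E F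

theorem fstEmbedding_apply (x : E) : fstEmbedding 𝕜 E F x = WithLp.toLp 2 (x, 0) := rfl

theorem semiconj_fstEmbedding_withLpProdCongr (W : E ≃ₗᵢ[𝕜] E) (W' : F ≃ₗᵢ[𝕜] F) :
    Semiconj (fstEmbedding 𝕜 E F) W (LinearIsometryEquiv.withLpProdCongr 2 W W') := fun x => by
  simp [fstEmbedding_apply]

theorem commute_withLpProdCongr {W X : E ≃ₗᵢ[𝕜] E} {W' X' : F ≃ₗᵢ[𝕜] F}
    (h : Function.Commute W X) (h' : Function.Commute W' X') :
    Function.Commute (LinearIsometryEquiv.withLpProdCongr 2 W W')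
      (LinearIsometryEquiv.withLpProdCongr 2 X X') := fun p => by
  simp [h.eq, h'.eq]

end L2Sum

section Isometries

variable {𝕜 H K : Type*} [RCLike 𝕜] [NormedAddCommGroup H] [InnerProductSpace 𝕜 H]
  [CompleteSpace H] [NormedAddCommGroup K] [InnerProductSpace 𝕜 K] [CompleteSpace K]

theorem adjoint_apply_self (f : H →ₗᵢ[𝕜] K) (x : H) : f† (f x) = x :=
  DFunLike.congr_fun f.adjoint_comp_self x

theorem norm_add_sub_apply_adjoint_sq (f : H →ₗᵢ[𝕜] K) (x : H) (y : K) :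
    ‖f x + (y - f (f† y))‖ ^ 2 = ‖x‖ ^ 2 + ‖y - f (f† y)‖ ^ 2 := by
  have horth : inner 𝕜 (f x) (y - f (f† y)) = 0 := by
    rw [inner_sub_right, f.inner_map_map, adjoint_inner_right, sub_eq_zero]
    rfl
  simpa [sq] using norm_add_sq_eq_norm_sq_add_norm_sq_of_inner_eq_zero _ _ horth

theorem norm_sq_eq_norm_adjoint_sq_add (f : H →ₗᵢ[𝕜] K) (y : K) :
    ‖y‖ ^ 2 = ‖f† y‖ ^ 2 + ‖y - f (f† y)‖ ^ 2 := by
  rw [← norm_add_sub_apply_adjoint_sq, add_sub_cancel]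

theorem commute_adjoint_of_commute {C : K →ₗᵢ[𝕜] K} {W : K ≃ₗᵢ[𝕜] K}
    (h : Function.Commute C W) : Function.Commute C† W := by
  intro y
  refine ext_inner_right 𝕜 fun x => ?_
  obtain ⟨z, rfl⟩ := W.surjective x
  simp only [adjoint_inner_left, LinearIsometry.coe_toContinuousLinearMap, h.eq, W.inner_map_map]

/-- The extension `f A f† + (1 - f f†)` of `A` to `K ⊇ f(H)`, which is the identity on `f(H)ᗮ`. -/
noncomputable def extendById (f : H →ₗᵢ[𝕜] K) (A : H →ₗᵢ[𝕜] H) : K →ₗᵢ[𝕜] K where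
  toLinearMap := f.toLinearMap ∘ₗ A.toLinearMap ∘ₗ f†.toLinearMap
    + (LinearMap.id - f.toLinearMap ∘ₗ f†.toLinearMap)
  norm_map' y := by
    refine (sq_eq_sq₀ (norm_nonneg _) (norm_nonneg _)).1 ?_
    rw [norm_sq_eq_norm_adjoint_sq_add f y, ← A.norm_map]
    exact norm_add_sub_apply_adjoint_sq f (A (f† y)) y

theorem extendById_apply (f : H →ₗᵢ[𝕜] K) (A : H →ₗᵢ[𝕜] H) (y : K) :
    extendById f A y = f (A (f† y)) + (y - f (f† y)) := rfl

theorem semiconj_extendById (f : H →ₗᵢ[𝕜] K) (A : H →ₗᵢ[𝕜] H) :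
    Semiconj f A (extendById f A) := fun x => by
  rw [extendById_apply, adjoint_apply_self, sub_self, add_zero]

theorem extendById_of_adjoint_eq_zero {f : H →ₗᵢ[𝕜] K} (A : H →ₗᵢ[𝕜] H) {y : K}
    (hy : f† y = 0) : extendById f A y = y := by
  simp [extendById_apply, hy]

-- The conjugates are eventually constant on each `W⁻ⁿ f(H)` and fix every vector orthogonal to all
-- of these subspaces, so a vector orthogonal to the convergence subspace belongs to it.
theorem dense_convergenceSubmodule_conjPow {f : H →ₗᵢ[𝕜] K} {A B : H →ₗᵢ[𝕜] H} {W : K ≃ₗᵢ[𝕜] K}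
    (hW : Semiconj f B W) (hAB : Function.Commute A B) :
    Dense (convergenceSubmodule
      (fun n => (conjPow W (extendById f A) n).toLinearMap) atTop : Set K) := by
  rw [Submodule.dense_iff_topologicalClosure_eq_top, Submodule.topologicalClosure_eq_top_iff,
    Submodule.eq_bot_iff]
  intro x hx
  have hfixed (n : ℕ) : conjPow W (extendById f A) n x = x := by
    have hadj : f† ((W ^ n) x) = 0 := by
      refine ext_inner_left 𝕜 fun z => ?_
      have hmem := (Submodule.mem_orthogonal _ _).1 hx ((W ^ n).symm (f z))
        ⟨(W ^ n).symm (f (A z)), tendsto_atTop_of_eventually_const (i₀ := n) fun k hk => ?_⟩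
      · rw [← (W ^ n).inner_map_map, LinearIsometryEquiv.apply_symm_apply] at hmem
        rwa [adjoint_inner_right, inner_zero_right]
      · obtain ⟨j, rfl⟩ := Nat.exists_eq_add_of_le' hk
        exact conjPow_add_apply_symm (semiconj_extendById f A) hW hAB j n z
    rw [conjPow_apply, extendById_of_adjoint_eq_zero A hadj, LinearIsometryEquiv.symm_apply_apply]
  refine inner_self_eq_zero.1 ((Submodule.mem_orthogonal _ _).1 hx x ⟨x, ?_⟩)
  exact tendsto_const_nhds.congr fun n => (hfixed n).symm

theorem exists_isometry_extension_commute {f : H →ₗᵢ[𝕜] K} {A B : H →ₗᵢ[𝕜] H} {W : K ≃ₗᵢ[𝕜] K}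
    (hW : Semiconj f B W) (hAB : Function.Commute A B) :
    ∃ C : K →ₗᵢ[𝕜] K, Semiconj f A C ∧ Function.Commute C W := by
  obtain ⟨C, hC⟩ := exists_linearIsometry_tendsto_of_dense _
    (dense_convergenceSubmodule_conjPow hW hAB)
  refine ⟨C, fun x => ?_, fun x => ?_⟩
  · refine tendsto_nhds_unique (tendsto_const_nhds.congr fun n => ?_) (hC (f x))
    exact (conjPow_add_apply_symm (semiconj_extendById f A) hW hAB n 0 x).symm
  · refine tendsto_nhds_unique (hC (W x)) (Tendsto.congr (fun n => ?_)
      ((W.continuous.tendsto _).comp ((tendsto_add_atTop_iff_nat 1).2 (hC x))))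
    exact (conjPow_apply_map W _ n x).symm

theorem exists_isometry_extension_commute_of_subsingleton {ι : Type*} {N : Set ι}
    (hN : N.Subsingleton) {f : H →ₗᵢ[𝕜] K} {A : H →ₗᵢ[𝕜] H} {B : ι → H →ₗᵢ[𝕜] H}
    {W : ι → K ≃ₗᵢ[𝕜] K} (hW : ∀ u ∈ N, Semiconj f (B u) (W u))
    (hAB : ∀ u ∈ N, Function.Commute A (B u)) :
    ∃ C : K →ₗᵢ[𝕜] K, Semiconj f A C ∧ ∀ u ∈ N, Function.Commute C (W u) := by
  obtain rfl | ⟨u, rfl⟩ := hN.eq_empty_or_singleton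
  · exact ⟨extendById f A, semiconj_extendById f A, by simp⟩
  · simpa using exists_isometry_extension_commute (hW u rfl) (hAB u rfl)

/-- The Halmos dilation of an isometry `C`: the unitary on `K ⊕ K` with block matrix
`[C, 1 - C C†; 0, C†]`, which restricts to `C` on the first summand. -/
noncomputable def halmosDilation (C : K →ₗᵢ[𝕜] K) :
    WithLp 2 (K × K) ≃ₗᵢ[𝕜] WithLp 2 (K × K) where
  toFun p := WithLp.toLp 2 (C p.fst + (p.snd - C (C† p.snd)), C† p.snd)
  invFun p := WithLp.toLp 2 (C† p.fst, C p.snd + (p.fst - C (C† p.fst)))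
  map_add' p q := by
    apply WithLp.ofLp_injective 2
    ext <;> simp
    abel
  map_smul' c p := by
    apply WithLp.ofLp_injective 2
    ext <;> simp [smul_add, smul_sub]
  left_inv p := by
    apply WithLp.ofLp_injective 2
    ext <;> simp [adjoint_apply_self]
  right_inv p := by
    apply WithLp.ofLp_injective 2
    ext <;> simp [adjoint_apply_self]
  norm_map' p := by
    refine (sq_eq_sq₀ (norm_nonneg _) (norm_nonneg _)).1 ?_
    rw [WithLp.prod_norm_sq_eq_of_L2, WithLp.prod_norm_sq_eq_of_L2,
      norm_sq_eq_norm_adjoint_sq_add C p.snd, ← add_assoc, add_right_comm]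
    exact congrArg (· + _) (norm_add_sub_apply_adjoint_sq C p.fst p.snd)

theorem halmosDilation_apply (C : K →ₗᵢ[𝕜] K) (p : WithLp 2 (K × K)) :
    halmosDilation C p = WithLp.toLp 2 (C p.fst + (p.snd - C (C† p.snd)), C† p.snd) := rfl

theorem commute_halmosDilation {C : K →ₗᵢ[𝕜] K} {W : K ≃ₗᵢ[𝕜] K} (h : Function.Commute C W) :
    Function.Commute (halmosDilation C) (LinearIsometryEquiv.withLpProdCongr 2 W W) := fun p => by
  apply WithLp.ofLp_injective 2
  ext <;> simp [halmosDilation_apply, h.eq, (commute_adjoint_of_commute h).eq]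

theorem semiconj_fstEmbedding_halmosDilation (C : K →ₗᵢ[𝕜] K) :
    Semiconj (fstEmbedding 𝕜 K K) C (halmosDilation C) := fun x => by
  simp [halmosDilation_apply, fstEmbedding_apply]

end Isometries

section UnitaryExtensions

variable {𝕜 V : Type*} {H : Type u} [RCLike 𝕜] [NormedAddCommGroup H] [InnerProductSpace 𝕜 H]
  [CompleteSpace H] {G : SimpleGraph V} {A : V → H →ₗᵢ[𝕜] H}

/-- The isometries `A j` with `j ∈ s` extend to unitaries on a common Hilbert space `K`,
containing `H` through `f`, such that those indexed by adjacent vertices of `s` commute. -/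
def HasUnitaryExtensionOn (G : SimpleGraph V) (A : V → H →ₗᵢ[𝕜] H) (s : Set V) : Prop :=
  ∃ (K : Type u) (_ : NormedAddCommGroup K) (_ : InnerProductSpace 𝕜 K) (_ : CompleteSpace K)
    (f : H →ₗᵢ[𝕜] K) (X : V → K ≃ₗᵢ[𝕜] K), (∀ j ∈ s, Semiconj f (A j) (X j)) ∧
      ∀ i ∈ s, ∀ j ∈ s, G.Adj i j → Function.Commute (X i) (X j)

theorem HasUnitaryExtensionOn.empty : HasUnitaryExtensionOn G A ∅ :=
  ⟨H, inferInstance, inferInstance, inferInstance, .id, fun _ => .refl 𝕜 H, by simp, by simp⟩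

theorem HasUnitaryExtensionOn.insert {s : Set V} {v : V} (h : HasUnitaryExtensionOn G A s)
    (hv : (G.neighborSet v ∩ s).Subsingleton)
    (hA : ∀ u ∈ s, G.Adj v u → Function.Commute (A v) (A u)) :
    HasUnitaryExtensionOn G A (insert v s) := by
  classical
  obtain ⟨K, _, _, _, f, X, hf, hX⟩ := h
  obtain ⟨C, hfC, hCX⟩ := exists_isometry_extension_commute_of_subsingleton hv
    (fun u hu => hf u hu.2) (fun u hu => hA u hu.2 hu.1)
  let Y : V → WithLp 2 (K × K) ≃ₗᵢ[𝕜] WithLp 2 (K × K) :=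
    Function.update (fun j => .withLpProdCongr 2 (X j) (X j)) v (halmosDilation C)
  have hYv : Y v = halmosDilation C := Function.update_self ..
  have hY {j : V} (hj : j ≠ v) : Y j = .withLpProdCongr 2 (X j) (X j) :=
    Function.update_of_ne hj ..
  have hYvY {j : V} (hj : j ∈ s) (hvj : G.Adj v j) : Function.Commute (Y v) (Y j) := by
    rw [hYv, hY hvj.ne']
    exact commute_halmosDilation (hCX j ⟨hvj, hj⟩)
  refine ⟨WithLp 2 (K × K), inferInstance, inferInstance, inferInstance,
    (fstEmbedding 𝕜 K K).comp f, Y, fun j hj => ?_, fun i hi j hj hij => ?_⟩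
  · rcases eq_or_ne j v with rfl | hjv
    · rw [hYv]
      exact hfC.trans (semiconj_fstEmbedding_halmosDilation C)
    · rw [hY hjv]
      exact (hf j (hj.resolve_left hjv)).trans (semiconj_fstEmbedding_withLpProdCongr _ _)
  · rcases eq_or_ne i v with rfl | hiv
    · exact hYvY (hj.resolve_left hij.ne') hij
    rcases eq_or_ne j v with rfl | hjv
    · exact (hYvY (hi.resolve_left hiv) hij.symm).symm
    rw [hY hiv, hY hjv]
    have hij' := hX i (hi.resolve_left hiv) j (hj.resolve_left hjv) hij
    exact commute_withLpProdCongr hij' hij'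

theorem HasUnitaryExtensionOn.of_isAcyclic (hG : G.IsAcyclic)
    (hA : ∀ i j, G.Adj i j → Function.Commute (A i) (A j)) (s : Finset V) :
    HasUnitaryExtensionOn G A s := by
  classical
  induction s using Finset.eraseInduction with | H s ih =>
  rcases s.eq_empty_or_nonempty with rfl | hs
  · simpa using HasUnitaryExtensionOn.empty
  obtain ⟨v, hv, hleaf⟩ :=
    exists_mem_subsingleton_neighborSet_inter_of_isAcyclic hG s.finite_toSet hs
  rw [← Finset.insert_erase hv, Finset.coe_insert]
  refine (ih v hv).insert (hleaf.anti ?_) fun u _ => hA v u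
  gcongr
  exact s.erase_subset v

end UnitaryExtensions

theorem acyclic_unitary_extension_of_isometries_general {𝕜 V : Type*} {H : Type u} [RCLike 𝕜]
    [Finite V] [NormedAddCommGroup H] [InnerProductSpace 𝕜 H] [CompleteSpace H]
    (G : SimpleGraph V) (hG : G.IsAcyclic) (A : V → H →L[𝕜] H)
    (hA : ∀ j, ContinuousLinearMap.adjoint (A j) ∘L A j = 1)
    (hcomm : ∀ i j, G.Adj i j → A i ∘L A j = A j ∘L A i) :
    ∃ (K : Type u) (_ : NormedAddCommGroup K) (_ : InnerProductSpace 𝕜 K) (_ : CompleteSpace K)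
      (f : H →ₗᵢ[𝕜] K) (X : V → unitary (K →L[𝕜] K)),
      (∀ i j, G.Adj i j → Commute (X i) (X j)) ∧
        ∀ j x, (X j : K →L[𝕜] K) (f x) = f (A j x) := by
  have := Fintype.ofFinite V
  let B (j : V) : H →ₗᵢ[𝕜] H :=
    ⟨(A j).toLinearMap, (norm_map_iff_adjoint_comp_self (A j)).2 (hA j)⟩
  obtain ⟨K, _, _, _, f, X, hf, hX⟩ := HasUnitaryExtensionOn.of_isAcyclic (A := B) hG
    (fun i j hij x => DFunLike.congr_fun (hcomm i j hij) x) Finset.univ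
  simp only [Finset.coe_univ, Set.mem_univ, true_imp_iff] at hf hX
  refine ⟨K, _, _, _, f, fun j => Unitary.linearIsometryEquiv.symm (X j), fun i j hij => ?_,
    fun j x => (hf j x).symm⟩
  have hXX : Commute (X i) (X j) := LinearIsometryEquiv.ext (hX i j hij)
  exact hXX.map Unitary.linearIsometryEquiv.symm

/-- Lemma 2.2, isometric version: if `G` is an acyclic graph on `{1, …, n}` and
`A₁, …, Aₙ` are isometries on `H` commuting according to `G`, then there is a
Hilbert space `K ⊇ H` and unitaries `X₁, …, Xₙ` on `K` commuting according to `G`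
such that `Xⱼ` extends `Aⱼ` for each `j`. -/
theorem acyclic_unitary_extension_of_isometries {n : ℕ} {H : Type}
    [NormedAddCommGroup H] [InnerProductSpace ℂ H] [CompleteSpace H]
    (G : SimpleGraph (Fin n)) (hG : G.IsAcyclic)
    (A : Fin n → H →L[ℂ] H)
    (hA : ∀ j, ContinuousLinearMap.adjoint (A j) ∘L A j = 1)
    (hcomm : ∀ i j, G.Adj i j → A i ∘L A j = A j ∘L A i) :
    Nonempty (GraphUnitaryExtension G A) := by
  obtain ⟨K, _, _, _, f, X, hX, hf⟩ :=
    acyclic_unitary_extension_of_isometries_general G hG A hA hcomm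
  exact ⟨⟨K, f, fun j => X j, fun j => (X j).2.2, fun j => (X j).2.1,
    fun i j hij => congrArg Subtype.val (hX i j hij), hf⟩⟩
end
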